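/- arXiv:1103.4906 — 3 statements merged into one kernel-verified Lean document; each statement's English description precedes it below -/
import Mathlib

section
/- Let c ∈ ℂ with c ≠ 0, and let (q1,p1,q2,p2) be a rational solution of A5^(2)(α0,α1,α2,α3) such that p1 and p2 both have a pole at c while q1 and q2 have no pole at c. Then p1 and p2 have simple poles at c; writing b for the residue of p1 at c and d for the residue of p2 at c, one has: 16·b·d + c = 0; q1(c) = −4d; q2(c) = −4b; the limit as t → c of p1(t) − b/(t−c) equals 3/8 + 2b²/c; the limit as t → c of p2(t) − d/(t−c) equals 3/8 + 2d²/c; and q1'(c)·b + q2'(c)·d + (α0+α1+α3)/2 = 1/2, where q1'(c), q2'(c) denote the derivatives of q1, q2 at c. -/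
open Filter Topology Polynomial

/-- Evaluation of a rational function with complex coefficients at a point,
using its reduced numerator and denominator. -/
noncomputable def evR (f : RatFunc ℂ) (t : ℂ) : ℂ := f.num.eval t / f.denom.eval t

/-- A rational function has no pole at `c` if its reduced denominator does not vanish at `c`. -/
def NoPoleAt (f : RatFunc ℂ) (c : ℂ) : Prop := f.denom.eval c ≠ 0

/-- `(q1, p1, q2, p2)` is a rational solution of the Sasano system
`A5^(2)(α0, α1, α2, α3)` (the parameter `α2` does not occur in the equations):
the four differential equations hold at every point `t ∈ ℂ` which is not a pole
of any of `q1, p1, q2, p2`. -/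
def IsSasanoSol (a0 a1 a3 : ℂ) (q1 p1 q2 p2 : RatFunc ℂ) : Prop :=
  ∀ t : ℂ, NoPoleAt q1 t → NoPoleAt p1 t → NoPoleAt q2 t → NoPoleAt p2 t →
    (t * deriv (evR q1) t =
      2 * (evR q1 t) ^ 2 * evR p1 t - (evR q1 t) ^ 2 + (a0 + a1 + a3) * evR q1 t
        - t + 4 * t * evR p2 t + 2 * evR q1 t * evR q2 t * evR p2 t) ∧
    (t * deriv (evR p1) t =
      -2 * evR q1 t * (evR p1 t) ^ 2 + 2 * evR q1 t * evR p1 t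
        - (a0 + a1 + a3) * evR p1 t + a0 - 2 * evR p1 t * evR q2 t * evR p2 t) ∧
    (t * deriv (evR q2) t =
      2 * (evR q2 t) ^ 2 * evR p2 t - (evR q2 t) ^ 2 + (a0 + a1 + a3) * evR q2 t
        - t + 4 * t * evR p1 t + 2 * evR q1 t * evR p1 t * evR q2 t) ∧
    (t * deriv (evR p2) t =
      -2 * evR q2 t * (evR p2 t) ^ 2 + 2 * evR q2 t * evR p2 t
        - (a0 + a1 + a3) * evR p2 t + a1 - 2 * evR q1 t * evR p1 t * evR p2 t)

lemma aux_nopole (f : RatFunc ℂ) (c : ℂ) (h : NoPoleAt f c) :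
    AnalyticAt ℂ (evR f) c ∧ ∀ᶠ t in 𝓝[≠] c, NoPoleAt f t := by
  have hn : AnalyticAt ℂ (fun t => f.num.eval t) c := by
    simpa using AnalyticAt.aeval_polynomial (analyticAt_id (𝕜 := ℂ) (z := c)) f.num
  have hd : AnalyticAt ℂ (fun t => f.denom.eval t) c := by
    simpa using AnalyticAt.aeval_polynomial (analyticAt_id (𝕜 := ℂ) (z := c)) f.denom
  refine ⟨hn.div hd h, ?_⟩
  exact (hd.continuousAt.eventually_ne h).filter_mono nhdsWithin_le_nhds

lemma aux_pole (f : RatFunc ℂ) (c : ℂ) (h : ¬ NoPoleAt f c) :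
    ∃ (k : ℕ) (u : ℂ → ℂ), AnalyticAt ℂ u c ∧ u c ≠ 0 ∧
      (evR f = fun t => u t / (t - c) ^ (k + 1)) ∧ ∀ᶠ t in 𝓝[≠] c, NoPoleAt f t := by
  have h0 : f.denom.eval c = 0 := by simpa [NoPoleAt] using h
  have hnum : f.num.eval c ≠ 0 := by
    intro h1
    obtain ⟨a, b, hab⟩ := f.isCoprime_num_denom
    have := congrArg (Polynomial.eval c) hab
    simp [h0, h1] at this
  obtain ⟨D, hD, hDc⟩ := Polynomial.exists_eq_pow_rootMultiplicity_mul_and_not_dvd f.denom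
    f.denom_ne_zero c
  have hm : 0 < f.denom.rootMultiplicity c :=
    (Polynomial.rootMultiplicity_pos f.denom_ne_zero).2 h0
  obtain ⟨k, hk⟩ : ∃ k, f.denom.rootMultiplicity c = k + 1 := ⟨_, (Nat.succ_pred_eq_of_pos hm).symm⟩
  rw [hk] at hD
  have hDc' : D.eval c ≠ 0 := fun h => hDc (Polynomial.dvd_iff_isRoot.2 h)
  have hn : AnalyticAt ℂ (fun t => f.num.eval t) c := by
    simpa using AnalyticAt.aeval_polynomial (analyticAt_id (𝕜 := ℂ) (z := c)) f.num
  have hd : AnalyticAt ℂ (fun t => D.eval t) c := by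
    simpa using AnalyticAt.aeval_polynomial (analyticAt_id (𝕜 := ℂ) (z := c)) D
  have hev : ∀ t, f.denom.eval t = (t - c) ^ (k + 1) * D.eval t := by
    intro t
    rw [hD]; simp
  refine ⟨k, fun t => f.num.eval t / D.eval t, hn.div hd hDc', div_ne_zero hnum hDc', ?_, ?_⟩
  · funext t
    rw [evR, hev, div_div, mul_comm]
  · filter_upwards [(hd.continuousAt.eventually_ne hDc').filter_mono nhdsWithin_le_nhds,
      self_mem_nhdsWithin] with t ht htc
    rw [NoPoleAt, hev]
    exact mul_ne_zero (pow_ne_zero _ (sub_ne_zero.2 htc)) ht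

lemma aux_A (c A a : ℂ) (k : ℕ) (u q g : ℂ → ℂ) (hu : AnalyticAt ℂ u c) (hq : AnalyticAt ℂ q c)
    (huc : u c ≠ 0)
    (h : ∀ᶠ t in 𝓝[≠] c, t * (deriv u t * (t - c) - (k + 1) * u t) =
      -2 * u t * g t + (t - c) * u t * (2 * q t - A) + a * (t - c) ^ (k + 2)) :
    Tendsto g (𝓝[≠] c) (𝓝 ((k + 1) * c / 2)) := by
  have hu' : ContinuousAt (deriv u) c := hu.deriv.continuousAt
  have hu0 := hu.continuousAt
  have hq0 := hq.continuousAt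
  have hne : (2 * u c) ≠ 0 := mul_ne_zero two_ne_zero huc
  have hcont : ContinuousAt (fun t => ((t - c) * u t * (2 * q t - A) + a * (t - c) ^ (k + 2)
      - t * (deriv u t * (t - c) - (k + 1) * u t)) / (2 * u t)) c := by
    refine ContinuousAt.div ?_ ?_ hne <;> fun_prop
  have hlim := hcont.tendsto.mono_left (nhdsWithin_le_nhds (s := {c}ᶜ))
  have hval : ((c - c) * u c * (2 * q c - A) + a * (c - c) ^ (k + 2)
      - c * (deriv u c * (c - c) - (k + 1) * u c)) / (2 * u c) = (k + 1) * c / 2 := by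
    simp only [sub_self]
    field_simp
    simp
    ring
  simp only [hval] at hlim
  refine hlim.congr' ?_
  filter_upwards [h, (hu0.eventually_ne huc).filter_mono nhdsWithin_le_nhds] with t ht hut
  rw [div_eq_iff (mul_ne_zero two_ne_zero hut), ht]
  ring

lemma aux_B (c A L : ℂ) (hc : c ≠ 0) (k : ℕ) (v q g : ℂ → ℂ) (hv : AnalyticAt ℂ v c)
    (hq : AnalyticAt ℂ q c) (hvc : v c ≠ 0) (hg : Tendsto g (𝓝[≠] c) (𝓝 L))
    (h : ∀ᶠ t in 𝓝[≠] c, (t - c) ^ k * ((t - c) * t * deriv q t - 2 * q t * g t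
      + (t - c) * (q t ^ 2 - A * q t + t)) = 4 * t * v t) : k = 0 := by
  by_contra hk
  have hq' : ContinuousAt (deriv q) c := hq.deriv.continuousAt
  have hv0 := hv.continuousAt
  have hq0 := hq.continuousAt
  have h1 : Tendsto (fun t => 4 * t * v t) (𝓝[≠] c) (𝓝 (4 * c * v c)) := by
    have : ContinuousAt (fun t => 4 * t * v t) c := by fun_prop
    exact this.tendsto.mono_left nhdsWithin_le_nhds
  have e1 : Tendsto (fun t => (t - c) ^ k) (𝓝[≠] c) (𝓝 ((c - c) ^ k)) := by
    have : ContinuousAt (fun t => (t - c) ^ k) c := by fun_prop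
    exact this.tendsto.mono_left nhdsWithin_le_nhds
  have e2 : Tendsto (fun t => (t - c) * t * deriv q t) (𝓝[≠] c) (𝓝 ((c - c) * c * deriv q c)) := by
    have : ContinuousAt (fun t => (t - c) * t * deriv q t) c := by fun_prop
    exact this.tendsto.mono_left nhdsWithin_le_nhds
  have e3 : Tendsto (fun t => 2 * q t) (𝓝[≠] c) (𝓝 (2 * q c)) := by
    have : ContinuousAt (fun t => 2 * q t) c := by fun_prop
    exact this.tendsto.mono_left nhdsWithin_le_nhds
  have e4 : Tendsto (fun t => (t - c) * (q t ^ 2 - A * q t + t)) (𝓝[≠] c)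
      (𝓝 ((c - c) * (q c ^ 2 - A * q c + c))) := by
    have : ContinuousAt (fun t => (t - c) * (q t ^ 2 - A * q t + t)) c := by fun_prop
    exact this.tendsto.mono_left nhdsWithin_le_nhds
  have h2 := (e1.mul ((e2.sub (e3.mul hg)).add e4)).congr' h
  have h3 := tendsto_nhds_unique h1 h2
  rw [sub_self, zero_pow hk, zero_mul] at h3
  exact mul_ne_zero (mul_ne_zero (by norm_num) hc) hvc h3

/-- value and first derivative of the `q`-equation at `c` -/
lemma aux_C (c A : ℂ) (u v q r : ℂ → ℂ) (hu : AnalyticAt ℂ u c) (hv : AnalyticAt ℂ v c)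
    (hq : AnalyticAt ℂ q c) (hr : AnalyticAt ℂ r c)
    (h : ∀ᶠ t in 𝓝[≠] c, (t - c) * t * deriv q t = 2 * q t * (q t * u t + r t * v t)
      + (t - c) * (A * q t - q t ^ 2 - t) + 4 * t * v t) :
    0 = 2 * q c * (q c * u c + r c * v c) + 4 * c * v c ∧
    c * deriv q c = 2 * deriv q c * (q c * u c + r c * v c) +
      2 * q c * (deriv q c * u c + q c * deriv u c + deriv r c * v c + r c * deriv v c)
      + (A * q c - q c ^ 2 - c) + 4 * v c + 4 * c * deriv v c := by
  have hq' := hq.deriv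
  have hid : AnalyticAt ℂ (fun t : ℂ => t) c := analyticAt_id
  have hl : AnalyticAt ℂ (fun t => (t - c) * t * deriv q t) c := by fun_prop
  have hR : AnalyticAt ℂ (fun t => 2 * q t * (q t * u t + r t * v t)
      + (t - c) * (A * q t - q t ^ 2 - t) + 4 * t * v t) c := by fun_prop
  have hE := (hl.frequently_eq_iff_eventually_eq hR).1 h.frequently
  have hv0 := hE.self_of_nhds
  have hd := Filter.EventuallyEq.deriv_eq hE
  have dq := hq.differentiableAt.hasDerivAt
  have du := hu.differentiableAt.hasDerivAt
  have dv := hv.differentiableAt.hasDerivAt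
  have dr := hr.differentiableAt.hasDerivAt
  have dq' := hq'.differentiableAt.hasDerivAt
  have di := hasDerivAt_id' c
  have ds := di.sub_const c
  have d1 := ((ds.mul di).mul dq').deriv
  have d2 := ((((dq.const_mul 2).mul ((dq.mul du).add (dr.mul dv))).add
    (ds.mul (((dq.const_mul A).sub (dq.pow 2)).sub di))).add ((di.const_mul 4).mul dv)).deriv
  have d3 := d1.symm.trans (hd.trans d2)
  simp at hv0 d3
  exact ⟨by linear_combination hv0, by linear_combination d3⟩

/-- value and first derivative of the `p`-equation at `c` -/
lemma aux_D (c A a : ℂ) (u v q r : ℂ → ℂ) (hu : AnalyticAt ℂ u c) (hv : AnalyticAt ℂ v c)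
    (hq : AnalyticAt ℂ q c) (hr : AnalyticAt ℂ r c)
    (h : ∀ᶠ t in 𝓝[≠] c, t * (deriv u t * (t - c) - u t) =
      -2 * u t * (q t * u t + r t * v t) + (t - c) * u t * (2 * q t - A) + a * (t - c) ^ 2) :
    -c * u c = -2 * u c * (q c * u c + r c * v c) ∧
    - u c = -2 * deriv u c * (q c * u c + r c * v c) -
      2 * u c * (deriv q c * u c + q c * deriv u c + deriv r c * v c + r c * deriv v c)
      + u c * (2 * q c - A) := by
  have hu' := hu.deriv
  have hid : AnalyticAt ℂ (fun t : ℂ => t) c := analyticAt_id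
  have hl : AnalyticAt ℂ (fun t => t * (deriv u t * (t - c) - u t)) c := by fun_prop
  have hR : AnalyticAt ℂ (fun t => -2 * u t * (q t * u t + r t * v t)
      + (t - c) * u t * (2 * q t - A) + a * (t - c) ^ 2) c := by fun_prop
  have hE := (hl.frequently_eq_iff_eventually_eq hR).1 h.frequently
  have hv0 := hE.self_of_nhds
  have hd := Filter.EventuallyEq.deriv_eq hE
  have dq := hq.differentiableAt.hasDerivAt
  have du := hu.differentiableAt.hasDerivAt
  have dv := hv.differentiableAt.hasDerivAt
  have dr := hr.differentiableAt.hasDerivAt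
  have du' := hu'.differentiableAt.hasDerivAt
  have di := hasDerivAt_id' c
  have ds := di.sub_const c
  have d1 := (di.mul ((du'.mul ds).sub du)).deriv
  have d2 := ((((du.const_mul (-2)).mul ((dq.mul du).add (dr.mul dv))).add
    ((ds.mul du).mul ((dq.const_mul 2).sub_const A))).add ((ds.pow 2).const_mul a)).deriv
  have d3 := d1.symm.trans (hd.trans d2)
  simp at hv0 d3
  exact ⟨by linear_combination -hv0, by linear_combination d3⟩

lemma aux_deriv (c t : ℂ) (k : ℕ) (u : ℂ → ℂ) (hu : AnalyticAt ℂ u t) (ht : t - c ≠ 0) :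
    deriv (fun t => u t / (t - c) ^ (k + 1)) t =
      (deriv u t * (t - c) - (k + 1) * u t) / (t - c) ^ (k + 2) := by
  have du := hu.differentiableAt.hasDerivAt
  have ds := ((hasDerivAt_id' t).sub_const c).pow (k + 1)
  have := (du.div ds (pow_ne_zero _ ht)).deriv
  refine Eq.trans this ?_
  simp only [Nat.add_sub_cancel, Nat.cast_add, Nat.cast_one, mul_one, Pi.pow_apply]
  rw [div_eq_div_iff (pow_ne_zero _ (pow_ne_zero _ ht)) (pow_ne_zero _ ht)]
  ring

lemma aux_lim1 (c : ℂ) (u : ℂ → ℂ) (hu : AnalyticAt ℂ u c) :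
    Tendsto (fun t => (t - c) * (u t / (t - c) ^ (0 + 1))) (𝓝[≠] c) (𝓝 (u c)) := by
  refine (hu.continuousAt.tendsto.mono_left nhdsWithin_le_nhds).congr' ?_
  filter_upwards [self_mem_nhdsWithin] with t ht
  have : t - c ≠ 0 := sub_ne_zero.2 ht
  rw [zero_add, pow_one]
  field_simp

lemma aux_lim2 (c : ℂ) (u : ℂ → ℂ) (hu : AnalyticAt ℂ u c) :
    Tendsto (fun t => (u t / (t - c) ^ (0 + 1)) - u c / (t - c)) (𝓝[≠] c) (𝓝 (deriv u c)) := by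
  have := hasDerivAt_iff_tendsto_slope.1 hu.differentiableAt.hasDerivAt
  refine this.congr' ?_
  filter_upwards [self_mem_nhdsWithin] with t ht
  have : t - c ≠ 0 := sub_ne_zero.2 ht
  rw [slope_def_field, zero_add, pow_one]
  field_simp

theorem sasano_p1_p2_pole_at_c (a0 a1 a2 a3 : ℂ)
    (hpar : a0 + a1 + 2 * a2 + a3 = 1 / 2)
    (c : ℂ) (hc : c ≠ 0)
    (q1 p1 q2 p2 : RatFunc ℂ)
    (hsol : IsSasanoSol a0 a1 a3 q1 p1 q2 p2)
    (hp1 : ¬ NoPoleAt p1 c) (hp2 : ¬ NoPoleAt p2 c)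
    (hq1 : NoPoleAt q1 c) (hq2 : NoPoleAt q2 c) :
    ∃ b d : ℂ, b ≠ 0 ∧ d ≠ 0 ∧
      Tendsto (fun t => (t - c) * evR p1 t) (𝓝[≠] c) (𝓝 b) ∧
      Tendsto (fun t => (t - c) * evR p2 t) (𝓝[≠] c) (𝓝 d) ∧
      16 * b * d + c = 0 ∧
      evR q1 c = -4 * d ∧
      evR q2 c = -4 * b ∧
      Tendsto (fun t => evR p1 t - b / (t - c)) (𝓝[≠] c) (𝓝 (3 / 8 + 2 * b ^ 2 / c)) ∧
      Tendsto (fun t => evR p2 t - d / (t - c)) (𝓝[≠] c) (𝓝 (3 / 8 + 2 * d ^ 2 / c)) ∧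
      deriv (evR q1) c * b + deriv (evR q2) c * d + (a0 + a1 + a3) / 2 = 1 / 2 := by
  obtain ⟨aq, nq⟩ := aux_nopole q1 c hq1
  obtain ⟨ar, nr⟩ := aux_nopole q2 c hq2
  obtain ⟨m, u, hu, huc, eu, nu⟩ := aux_pole p1 c hp1
  obtain ⟨n, v, hv, hvc, ev, nv⟩ := aux_pole p2 c hp2
  have hS : ∀ᶠ t in 𝓝[≠] c, t - c ≠ 0 := by
    filter_upwards [self_mem_nhdsWithin] with t ht
    exact sub_ne_zero.2 ht
  have hu1 := (hu.eventually_analyticAt).filter_mono (nhdsWithin_le_nhds (s := {c}ᶜ))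
  have hv1 := (hv.eventually_analyticAt).filter_mono (nhdsWithin_le_nhds (s := {c}ᶜ))
  set q : ℂ → ℂ := evR q1 with hq
  set r : ℂ → ℂ := evR q2 with hr
  set A := a0 + a1 + a3 with hA
  set g : ℂ → ℂ := fun t => (t - c) * (q t * (u t / (t - c) ^ (m + 1))
    + r t * (v t / (t - c) ^ (n + 1))) with hg
  have key : ∀ᶠ t in 𝓝[≠] c,
      (t * (deriv u t * (t - c) - (m + 1) * u t) =
        -2 * u t * g t + (t - c) * u t * (2 * q t - A) + a0 * (t - c) ^ (m + 2)) ∧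
      (t * (deriv v t * (t - c) - (n + 1) * v t) =
        -2 * v t * g t + (t - c) * v t * (2 * r t - A) + a1 * (t - c) ^ (n + 2)) ∧
      ((t - c) ^ n * ((t - c) * t * deriv q t - 2 * q t * g t
        + (t - c) * (q t ^ 2 - A * q t + t)) = 4 * t * v t) ∧
      ((t - c) ^ m * ((t - c) * t * deriv r t - 2 * r t * g t
        + (t - c) * (r t ^ 2 - A * r t + t)) = 4 * t * u t) := by
    filter_upwards [nq, nr, nu, nv, hS, hu1, hv1] with t h1 h2 h3 h4 hs hut hvt
    obtain ⟨e1, e2, e3, e4⟩ := hsol t h1 h3 h2 h4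
    rw [eu, aux_deriv c t m u hut hs, ev] at e2
    rw [ev, aux_deriv c t n v hvt hs, eu] at e4
    rw [eu, ev] at e1 e3
    simp only [← hq, ← hr, ← hA] at e1 e2 e3 e4
    obtain ⟨P, hP⟩ : ∃ P, P = u t / (t - c) ^ (m + 1) := ⟨_, rfl⟩
    obtain ⟨Q, hQ⟩ : ∃ Q, Q = v t / (t - c) ^ (n + 1) := ⟨_, rfl⟩
    have hP' : u t = P * (t - c) ^ (m + 1) := by
      rw [hP, div_mul_cancel₀ _ (pow_ne_zero _ hs)]
    have hQ' : v t = Q * (t - c) ^ (n + 1) := by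
      rw [hQ, div_mul_cancel₀ _ (pow_ne_zero _ hs)]
    rw [mul_div_assoc', div_eq_iff (pow_ne_zero _ hs)] at e2 e4
    simp only [hg, ← hP, ← hQ] at e1 e2 e3 e4 ⊢
    refine ⟨?_, ?_, ?_, ?_⟩
    · rw [e2, hP']; ring
    · rw [e4, hQ']; ring
    · rw [hQ']; linear_combination (t - c) ^ (n + 1) * e1
    · rw [hP']; linear_combination (t - c) ^ (m + 1) * e3
  have hgl := aux_A c A a0 m u q g hu aq huc (key.mono fun t h => h.1)
  have hn0 := aux_B c A _ hc n v q g hv aq hvc hgl (key.mono fun t h => h.2.2.1)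
  have hm0 := aux_B c A _ hc m u r g hu ar huc hgl (key.mono fun t h => h.2.2.2)
  subst hn0 hm0
  have hgs : ∀ᶠ t in 𝓝[≠] c, g t = q t * u t + r t * v t := by
    filter_upwards [hS] with t hs
    simp only [hg]
    field_simp
    try ring
  obtain ⟨x1, x2⟩ := aux_C c A u v q r hu hv aq ar (by
    filter_upwards [key, hgs] with t h h'
    rw [← h']; linear_combination h.2.2.1)
  obtain ⟨y1, y2⟩ := aux_C c A v u r q hv hu ar aq (by
    filter_upwards [key, hgs] with t h h'
    rw [add_comm, ← h'] at *; linear_combination h.2.2.2)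
  obtain ⟨z1, z2⟩ := aux_D c A a0 u v q r hu hv aq ar (by
    filter_upwards [key, hgs] with t h h'
    have := h.1
    rw [h'] at this; push_cast at this; linear_combination this)
  obtain ⟨w1, w2⟩ := aux_D c A a1 v u r q hv hu ar aq (by
    filter_upwards [key, hgs] with t h h'
    have := h.2.1
    rw [h'] at this; push_cast at this; linear_combination this)
  have hw : 2 * (q c * u c + r c * v c) = c := by
    apply mul_left_cancel₀ huc; linear_combination z1
  have hqc : q c = -4 * v c := by
    apply mul_left_cancel₀ hc; linear_combination -x1 - q c * hw
  have hrc : r c = -4 * u c := by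
    apply mul_left_cancel₀ hc; linear_combination -y1 - r c * hw
  have hbd : 16 * u c * v c + c = 0 := by
    rw [hqc, hrc] at hw; linear_combination -hw
  obtain ⟨W, hW⟩ : ∃ W, W = deriv q c * u c + q c * deriv u c + deriv r c * v c
    + r c * deriv v c := ⟨_, rfl⟩
  have X : 4 * c * deriv v c = 8 * v c * W + 4 * A * v c + 16 * v c ^ 2 + c - 4 * v c := by
    have x3 : 0 = 2 * q c * W + (A * q c - q c ^ 2 - c) + 4 * v c + 4 * c * deriv v c := by
      rw [hW]; linear_combination x2 + deriv q c * hw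
    rw [hqc] at x3
    linear_combination -x3
  have Y : 4 * c * deriv u c = 8 * u c * W + 4 * A * u c + 16 * u c ^ 2 + c - 4 * u c := by
    have y3 : 0 = 2 * r c * W + (A * r c - r c ^ 2 - c) + 4 * u c + 4 * c * deriv u c := by
      rw [hW]; linear_combination y2 + deriv r c * hw
    rw [hrc] at y3
    linear_combination -y3
  have V : c * deriv v c = v c - 2 * v c * W - 8 * u c * v c - A * v c := by
    have w3 : -v c = -c * deriv v c - 2 * v c * W + v c * (2 * r c - A) := by
      rw [hW]; linear_combination w2 - deriv v c * hw
    rw [hrc] at w3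
    linear_combination w3
  have hWv : W = (1 - A) / 2 - u c - v c := by
    have : 16 * v c ≠ 0 := mul_ne_zero (by norm_num) hvc
    apply mul_left_cancel₀ this
    linear_combination 4 * V - X - hbd
  have fv : deriv v c = 3 / 8 + 2 * v c ^ 2 / c := by
    field_simp
    rw [hWv] at V
    linear_combination 8 * V - 3 * hbd
  have fu : deriv u c = 3 / 8 + 2 * u c ^ 2 / c := by
    field_simp
    rw [hWv] at Y
    linear_combination 2 * Y - hbd
  refine ⟨u c, v c, huc, hvc, ?_, ?_, hbd, hqc, hrc, ?_, ?_, ?_⟩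
  · rw [eu]; exact aux_lim1 c u hu
  · rw [ev]; exact aux_lim1 c v hv
  · rw [eu, ← fu]; exact aux_lim2 c u hu
  · rw [ev, ← fv]; exact aux_lim2 c v hv
  · have hcu : c * deriv u c = 3 / 8 * c + 2 * u c ^ 2 := by rw [fu]; field_simp
    have hcv : c * deriv v c = 3 / 8 * c + 2 * v c ^ 2 := by rw [fv]; field_simp
    rw [hWv, hqc, hrc] at hW
    apply mul_left_cancel₀ hc
    linear_combination (-c) * hW + 4 * v c * hcu + 4 * u c * hcv + (u c + v c) / 2 * hbd
end

section
/- Let (q1,p1,q2,p2) be a rational solution of A5^(2)(α0,α1,α2,α3) and let c ∈ ℂ with c ≠ 0. Then there exist integers m and n such that the functions t ↦ q1(t) − m·c/(t−c) and t ↦ q2(t) − n·c/(t−c) have no pole at c. In particular, q1 and q2 have a pole of order at most one at every nonzero point of ℂ, and any such pole is simple with residue an integer multiple of c. -/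
open Filter Topology Polynomial

/-- `f = (a + o(1)) (t-c)^n` near `c`, with an analytic cofactor. -/
def LC (c : ℂ) (f : ℂ → ℂ) (n : ℤ) (a : ℂ) : Prop :=
  ∃ F : ℂ → ℂ, AnalyticAt ℂ F c ∧ F c = a ∧ ∀ᶠ t in 𝓝[≠] c, f t = (t - c) ^ n * F t

section LCsec
variable {c : ℂ} {f g : ℂ → ℂ} {n m : ℤ} {a b : ℂ}

lemma ev_ne (c : ℂ) : ∀ᶠ t in 𝓝[≠] c, t - c ≠ 0 := by
  filter_upwards [self_mem_nhdsWithin] with t ht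
  exact sub_ne_zero.2 ht

lemma LC.congr (h : LC c f n a) (hfg : ∀ᶠ t in 𝓝[≠] c, g t = f t) : LC c g n a := by
  obtain ⟨F, h1, h2, h3⟩ := h
  refine ⟨F, h1, h2, ?_⟩
  filter_upwards [h3, hfg] with t h h'
  rw [h', h]

lemma LC.cast (h : LC c f n a) (hn : n = m) (ha : a = b) : LC c f m b := by
  subst hn ha; exact h

lemma LC.uniq (h : LC c f n a) (h' : LC c f n b) : a = b := by
  obtain ⟨F, h1, h2, h3⟩ := h
  obtain ⟨G, g1, g2, g3⟩ := h'
  have e : F =ᶠ[𝓝[≠] c] G := by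
    filter_upwards [h3, g3, ev_ne c] with t h h' hne
    rw [h] at h'
    exact mul_left_cancel₀ (zpow_ne_zero _ hne) h'
  have t1 : Tendsto F (𝓝[≠] c) (𝓝 a) := by
    rw [← h2]; exact h1.continuousAt.tendsto.mono_left nhdsWithin_le_nhds
  have t2 : Tendsto G (𝓝[≠] c) (𝓝 b) := by
    rw [← g2]; exact g1.continuousAt.tendsto.mono_left nhdsWithin_le_nhds
  exact tendsto_nhds_unique (t1.congr' e) t2

lemma LC.eqv (h : LC c f n a) (h' : LC c g n b) (hfg : ∀ᶠ t in 𝓝[≠] c, f t = g t) : a = b :=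
  h.uniq (h'.congr hfg)

lemma LC.add (h : LC c f n a) (h' : LC c g n b) : LC c (fun t => f t + g t) n (a + b) := by
  obtain ⟨F, h1, h2, h3⟩ := h
  obtain ⟨G, g1, g2, g3⟩ := h'
  refine ⟨fun t => F t + G t, h1.fun_add g1, by simp [h2, g2], ?_⟩
  filter_upwards [h3, g3] with t h h'
  rw [h, h']; ring

lemma LC.sub (h : LC c f n a) (h' : LC c g n b) : LC c (fun t => f t - g t) n (a - b) := by
  obtain ⟨F, h1, h2, h3⟩ := h
  obtain ⟨G, g1, g2, g3⟩ := h'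
  refine ⟨fun t => F t - G t, h1.fun_sub g1, by simp [h2, g2], ?_⟩
  filter_upwards [h3, g3] with t h h'
  rw [h, h']; ring

lemma LC.mul (h : LC c f n a) (h' : LC c g m b) : LC c (fun t => f t * g t) (n + m) (a * b) := by
  obtain ⟨F, h1, h2, h3⟩ := h
  obtain ⟨G, g1, g2, g3⟩ := h'
  refine ⟨fun t => F t * G t, h1.fun_mul g1, by simp [h2, g2], ?_⟩
  filter_upwards [h3, g3, ev_ne c] with t h h' hne
  rw [h, h', zpow_add₀ hne]; ring

lemma LC.const (k : ℂ) : LC c (fun _ => k) 0 k :=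
  ⟨fun _ => k, analyticAt_const, rfl, by simp⟩

lemma LC.smul (k : ℂ) (h : LC c f n a) : LC c (fun t => k * f t) n (k * a) :=
  ((LC.const k).mul h).cast (by ring) rfl

lemma LC.id : LC c (fun t => t) 0 c :=
  ⟨fun t => t, analyticAt_id, rfl, by simp⟩

lemma LC.idmul (h : LC c f n a) : LC c (fun t => t * f t) n (c * a) :=
  (LC.id.mul h).cast (by ring) rfl

lemma LC.wk (h : LC c f n a) (hm : m < n) : LC c f m 0 := by
  obtain ⟨F, h1, h2, h3⟩ := h
  obtain ⟨k, rfl⟩ : ∃ k : ℕ, n = m + (k + 1) := ⟨(n - m - 1).toNat, by omega⟩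
  refine ⟨fun t => (t - c) ^ (k + 1) * F t, by fun_prop, by simp, ?_⟩
  filter_upwards [h3, ev_ne c] with t h hne
  rw [h, zpow_add₀ hne, mul_assoc]
  norm_cast

lemma LC.le (h : LC c f n a) (hm : m ≤ n) : ∃ b, LC c f m b := by
  rcases hm.eq_or_lt with rfl | h'
  · exact ⟨_, h⟩
  · exact ⟨_, h.wk h'⟩

lemma LC.step (h : LC c f n 0) : ∃ b, LC c f (n + 1) b := by
  obtain ⟨F, h1, h2, h3⟩ := h
  obtain ⟨p, hp⟩ := h1
  refine ⟨_, dslope F c, ⟨_, hp.has_fpower_series_dslope_fslope⟩, rfl, ?_⟩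
  filter_upwards [h3, ev_ne c] with t h hne
  have := sub_smul_dslope F c t
  rw [h2, sub_zero, smul_eq_mul] at this
  rw [h, zpow_add₀ hne, zpow_one, mul_assoc, this]

lemma LC.del (h : LC c f n a) : LC c (fun t => t * deriv f t) (n - 1) (c * (n * a)) := by
  obtain ⟨F, h1, h2, h3⟩ := h
  refine ⟨fun t => t * (n * F t + (t - c) * deriv F t), ?_, by simp [h2], ?_⟩
  · have := h1.deriv
    fun_prop
  have h4 := (eventually_nhdsWithin_eventually_nhds_iff_of_isOpen isOpen_compl_singleton).2 h3
  have h5 : ∀ᶠ t in 𝓝[≠] c, DifferentiableAt ℂ F t :=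
    (h1.eventually_analyticAt.mono fun t h => h.differentiableAt).filter_mono nhdsWithin_le_nhds
  filter_upwards [h4, h5, ev_ne c] with t h hd hne
  have h' : f =ᶠ[𝓝 t] fun t => (t - c) ^ n * F t := h
  have hz : HasDerivAt (fun s : ℂ => (s - c) ^ n) (n * (t - c) ^ (n - 1)) t := by
    have := (hasDerivAt_zpow n (t - c) (Or.inl hne)).comp_sub_const t c
    exact this
  rw [h'.deriv_eq, (hz.fun_mul hd.hasDerivAt).deriv, zpow_sub_one₀ hne]
  field_simp

lemma LC.div {v : ℂ → ℂ} (h : LC c f n a) (ha : a ≠ 0) (h' : LC c g m b)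
    (e : ∀ᶠ t in 𝓝[≠] c, f t * v t = g t) : LC c v (m - n) (b / a) := by
  obtain ⟨F, h1, h2, h3⟩ := h
  obtain ⟨G, g1, g2, g3⟩ := h'
  have hF : ∀ᶠ t in 𝓝[≠] c, F t ≠ 0 :=
    (h1.continuousAt.eventually_ne (by rwa [h2])).filter_mono nhdsWithin_le_nhds
  refine ⟨fun t => G t / F t, g1.fun_div h1 (by rwa [h2]), by simp [h2, g2], ?_⟩
  filter_upwards [h3, g3, hF, e, ev_ne c] with t h h' hf e hne
  rw [h, h'] at e
  rw [zpow_sub₀ hne]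
  have := zpow_ne_zero n hne
  field_simp
  linear_combination e

lemma LC.dich (h : LC c f n a) (M : ℤ) :
    (∃ b, LC c f M b) ∨ ∃ k < M, ∃ b, b ≠ 0 ∧ LC c f k b := by
  obtain ⟨d, hd⟩ : ∃ d : ℕ, d = (M - n).toNat := ⟨_, rfl⟩
  induction d generalizing n a with
  | zero => exact Or.inl (h.le (by omega))
  | succ d ih =>
    by_cases ha : a = 0
    · subst ha
      obtain ⟨b, hb⟩ := h.step
      exact ih hb (by omega)
    · exact Or.inr ⟨n, by omega, a, ha, h⟩

lemma LC.exists (h : MeromorphicAt f c) : ∃ n a, LC c f n a := by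
  obtain ⟨n, hn⟩ := h
  refine ⟨-n, _, _, hn, rfl, ?_⟩
  filter_upwards [ev_ne c] with t hne
  have := pow_ne_zero n hne
  rw [smul_eq_mul, zpow_neg, zpow_natCast]
  field_simp

/-- The Euler derivative of a regular function is regular. -/
lemma LC.del0 (h : LC c f 0 a) : ∃ b, LC c (fun t => t * deriv f t) 0 b := by
  have := (h.del).cast (m := -1) (b := 0) (by ring) (by simp)
  simpa using this.step

end LCsec

/-- The Sasano system near `c`, with `w = 2 (q1 p1 + q2 p2) + A`. -/
structure Sys (c a0 a1 A : ℂ) (q1 p1 q2 p2 w : ℂ → ℂ) : Prop where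
  hc : c ≠ 0
  mq1 : ∃ n a, LC c q1 n a
  mp1 : ∃ n a, LC c p1 n a
  mq2 : ∃ n a, LC c q2 n a
  mp2 : ∃ n a, LC c p2 n a
  mw : ∃ n a, LC c w n a
  e1 : ∀ᶠ t in 𝓝[≠] c, t * deriv q1 t = q1 t * w t - q1 t * q1 t - t + 4 * (t * p2 t)
  e2 : ∀ᶠ t in 𝓝[≠] c, t * deriv p1 t = 2 * (q1 t * p1 t) - p1 t * w t + a0
  e3 : ∀ᶠ t in 𝓝[≠] c, t * deriv q2 t = q2 t * w t - q2 t * q2 t - t + 4 * (t * p1 t)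
  e4 : ∀ᶠ t in 𝓝[≠] c, t * deriv p2 t = 2 * (q2 t * p2 t) - p2 t * w t + a1
  e5 : ∀ᶠ t in 𝓝[≠] c, w t = 2 * (q1 t * p1 t + q2 t * p2 t) + A

section SysSec
variable {c a0 a1 A : ℂ} {q1 p1 q2 p2 w : ℂ → ℂ}

lemma Sys.symm (S : Sys c a0 a1 A q1 p1 q2 p2 w) : Sys c a1 a0 A q2 p2 q1 p1 w where
  hc := S.hc
  mq1 := S.mq2
  mp1 := S.mp2
  mq2 := S.mq1
  mp2 := S.mp1
  mw := S.mw
  e1 := S.e3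
  e2 := S.e4
  e3 := S.e1
  e4 := S.e2
  e5 := by
    filter_upwards [S.e5] with t h
    rw [h]; ring

/-- If `p1` has a pole of order `-n`, then `2 q1 - w ~ n c / (t - c)`. -/
lemma Sys.vpole (S : Sys c a0 a1 A q1 p1 q2 p2 w) {n : ℤ} {a : ℂ} (hn : n < 0) (ha : a ≠ 0)
    (h : LC c p1 n a) : LC c (fun t => 2 * q1 t - w t) (-1) (n * c) := by
  have h0 : LC c (fun _ => a0) (n - 1) 0 := (LC.const a0).wk (by omega)
  refine (h.div ha (h.del.sub h0) ?_).cast (by ring) (by field_simp; ring)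
  filter_upwards [S.e2] with t ht
  rw [ht]; ring

/-- From E1, when `q1 ~ a/(t-c)` and `w ~ ω/(t-c)`, get the double pole part of `p2`. -/
lemma Sys.p2two (S : Sys c a0 a1 A q1 p1 q2 p2 w) {x y : ℂ}
    (hq : LC c q1 (-1) (c * x)) (hw : LC c w (-1) (c * y)) :
    LC c p2 (-2) (c * (x * x - x - x * y) / 4) := by
  have hc := S.hc
  have h1 : LC c (fun t => 4 * t) 0 (4 * c) := LC.id.smul 4
  have hd := hq.del.cast (m := -2) (by norm_num) rfl
  have hqw := (hq.mul hw).cast (m := -2) (by norm_num) rfl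
  have hqq := (hq.mul hq).cast (m := -2) (by norm_num) rfl
  have ht : LC c (fun t => t) (-2) 0 := LC.id.wk (by norm_num)
  refine (h1.div (by simpa using hc) (((hd.sub hqw).add hqq).add ht) ?_).cast (by norm_num) ?_
  · filter_upwards [S.e1] with t ht
    rw [ht]; ring
  · push_cast
    field_simp
    ring

/-- The conclusion, at the level of `LC`. -/
def Good (c : ℂ) (q1 q2 : ℂ → ℂ) : Prop :=
  ∃ m n : ℤ, LC c q1 (-1) (c * m) ∧ LC c q2 (-1) (c * n)

lemma Good.symm {q1 q2 : ℂ → ℂ} (h : Good c q1 q2) : Good c q2 q1 := by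
  obtain ⟨m, n, h1, h2⟩ := h
  exact ⟨n, m, h2, h1⟩

/-- pole orders 2 and 1 cannot coexist -/
lemma Sys.no21 (S : Sys c a0 a1 A q1 p1 q2 p2 w) {P1 P2 : ℂ}
    (h1 : LC c p1 (-2) P1) (h2 : LC c p2 (-1) P2) (hP1 : P1 ≠ 0) (hP2 : P2 ≠ 0)
    {y : ℂ} (hw : LC c w (-1) (c * y)) : False := by
  have hc := S.hc
  have v1 := S.vpole (by norm_num) hP1 h1
  have v2 := S.symm.vpole (by norm_num) hP2 h2
  have hq1 : LC c q1 (-1) (c * ((y - 2) / 2)) := by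
    refine ((v1.add hw).smul (1/2)).congr (by filter_upwards with t; ring) |>.cast rfl ?_
    push_cast; ring
  have hq2 : LC c q2 (-1) (c * ((y - 1) / 2)) := by
    refine ((v2.add hw).smul (1/2)).congr (by filter_upwards with t; ring) |>.cast rfl ?_
    push_cast; ring
  have r2 := S.p2two hq1 hw
  have r1 := S.symm.p2two hq2 hw
  have i1 := h1.uniq r1
  have i2 := (h2.wk (m := -2) (by norm_num)).uniq r2
  -- coefficient of (t-c)^(-3) in E5
  have hw3 : LC c (fun t => w t - A) (-3) (0 - 0) :=
    (hw.wk (by norm_num)).sub ((LC.const A).wk (by norm_num))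
  have k1 := ((hq1.mul h1).cast (m := -3) (by norm_num) rfl).add
    ((hq2.mul h2).wk (m := -3) (by norm_num))
  have i3 := hw3.eqv (k1.smul 2) (by filter_upwards [S.e5] with t ht; rw [ht]; ring)
  have hy : y = 2 := by
    have : c * P1 * (y - 2) = 0 := by linear_combination -i3
    rcases mul_eq_zero.1 this with h | h
    · exact absurd h (mul_ne_zero hc hP1)
    · linear_combination h
  subst hy
  obtain ⟨r, hr⟩ := (hq1.cast (b := 0) rfl (by ring)).step
  norm_num at hr
  have hq1' : LC c q1 0 r := hr
  -- E1 at order -1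
  have d1 := hq1'.del
  have j1 := ((((hq1'.mul hw).cast (m := -1) (by norm_num) rfl).sub
    ((hq1'.mul hq1').wk (m := -1) (by norm_num))).sub (LC.id.wk (m := -1) (by norm_num))).add
    (h2.idmul.smul 4)
  have i4 := (d1.cast (m := -1) (by norm_num) rfl).eqv j1 S.e1
  -- E5 at order -2
  have hw2 : LC c (fun t => w t - A) (-2) (0 - 0) :=
    (hw.wk (by norm_num)).sub ((LC.const A).wk (by norm_num))
  have k2 := ((hq1'.mul h1).cast (m := -2) (by norm_num) rfl).add
    ((hq2.mul h2).cast (m := -2) (by norm_num) rfl)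
  have i5 := hw2.eqv (k2.smul 2) (by filter_upwards [S.e5] with t ht; rw [ht]; ring)
  push_cast at i4
  have hr2 : r = -2 * P2 := by
    have : c * (r + 2 * P2) = 0 := by linear_combination -i4 / 2
    rcases mul_eq_zero.1 this with h | h
    · exact absurd h hc
    · linear_combination h
  rw [hr2, i1] at i5
  have : c * P2 = 0 := by
    linear_combination (-4/9 : ℂ) * i5
  exact mul_ne_zero hc hP2 this

lemma Sys.caseA (S : Sys c a0 a1 A q1 p1 q2 p2 w) {n1 n2 : ℤ} {P1 P2 : ℂ}
    (h1 : LC c p1 n1 P1) (h2 : LC c p2 n2 P2) (hP1 : P1 ≠ 0) (hP2 : P2 ≠ 0)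
    (hn1 : n1 < 0) (hn2 : n2 < 0) : Good c q1 q2 := by
  have hc := S.hc
  have v1 := S.vpole hn1 hP1 h1
  have v2 := S.symm.vpole hn2 hP2 h2
  obtain ⟨n0, x0, hw0⟩ := S.mw
  rcases hw0.dich (-1) with ⟨y, hw⟩ | ⟨k, hk, y, hy, hw⟩
  · obtain ⟨y, rfl⟩ : ∃ z, y = c * z := ⟨y / c, by field_simp⟩
    have hq1 : LC c q1 (-1) (c * ((y + n1) / 2)) := by
      refine ((v1.add hw).smul (1/2)).congr (by filter_upwards with t; ring) |>.cast rfl ?_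
      ring
    have hq2 : LC c q2 (-1) (c * ((y + n2) / 2)) := by
      refine ((v2.add hw).smul (1/2)).congr (by filter_upwards with t; ring) |>.cast rfl ?_
      ring
    have r2 := S.p2two hq1 hw
    have r1 := S.symm.p2two hq2 hw
    have b1 : -2 ≤ n1 := by
      by_contra hlt
      exact hP1 (h1.uniq (r1.wk (by omega)))
    have b2 : -2 ≤ n2 := by
      by_contra hlt
      exact hP2 (h2.uniq (r2.wk (by omega)))
    obtain rfl | rfl : n1 = -1 ∨ n1 = -2 := by omega
    · obtain rfl | rfl : n2 = -1 ∨ n2 = -2 := by omega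
      · have i1 := (h1.wk (m := -2) (by norm_num)).uniq r1
        have : c * ((y - 1) * (y + 3)) = 0 := by
          push_cast at i1
          linear_combination 16 * i1
        rcases mul_eq_zero.1 this with h | h
        · exact absurd h hc
        rcases mul_eq_zero.1 h with h | h
        · refine ⟨0, 0, hq1.cast rfl ?_, hq2.cast rfl ?_⟩ <;> push_cast <;>
            linear_combination c / 2 * h
        · refine ⟨-2, -2, hq1.cast rfl ?_, hq2.cast rfl ?_⟩ <;> push_cast <;>
            linear_combination c / 2 * h
      · exact (S.symm.no21 h2 h1 hP2 hP1 hw).elim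
    · obtain rfl | rfl : n2 = -1 ∨ n2 = -2 := by omega
      · exact (S.no21 h1 h2 hP1 hP2 hw).elim
      · exfalso
        have i1 := h1.uniq r1
        have i2 := h2.uniq r2
        have hw3 : LC c (fun t => w t - A) (-3) (0 - 0) :=
          (hw.wk (by norm_num)).sub ((LC.const A).wk (by norm_num))
        have k1 := ((hq1.mul h1).cast (m := -3) (by norm_num) rfl).add
          ((hq2.mul h2).cast (m := -3) (by norm_num) rfl)
        have i3 := hw3.eqv (k1.smul 2) (by filter_upwards [S.e5] with t ht; rw [ht]; ring)
        have i12 : P2 = P1 := by rw [i1, i2]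
        rw [i12] at i3
        push_cast at i3 i1
        have : c * P1 * (y - 2) = 0 := by linear_combination -i3 / 2
        rcases mul_eq_zero.1 this with h | h
        · exact absurd h (mul_ne_zero hc hP1)
        · apply hP1
          rw [i1]
          linear_combination (c / 4) * ((y-2)/4 - 1/2 - y/2) * h
  · exfalso
    have key : ∀ {a0 a1 : ℂ} {q1 p1 q2 p2 : ℂ → ℂ} {n : ℤ}, Sys c a0 a1 A q1 p1 q2 p2 w →
        LC c (fun t => 2 * q1 t - w t) (-1) (n * c) →
        LC c q1 k (y / 2) ∧ LC c p2 (2 * k) (- y ^ 2 / (16 * c)) := by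
      intro a0 a1 q1 p1 q2 p2 n S v
      have hq : LC c q1 k (y / 2) := by
        refine (((v.wk hk).add hw).smul (1/2)).congr (by filter_upwards with t; ring)
          |>.cast rfl (by ring)
      refine ⟨hq, ?_⟩
      have h1 : LC c (fun t => 4 * t) 0 (4 * c) := LC.id.smul 4
      have hd := hq.del.wk (m := 2 * k) (by omega)
      have hqw := (hq.mul hw).cast (m := 2 * k) (by ring) rfl
      have hqq := (hq.mul hq).cast (m := 2 * k) (by ring) rfl
      have ht : LC c (fun t => t) (2 * k) 0 := LC.id.wk (by omega)
      refine (h1.div (by simpa using hc) (((hd.sub hqw).add hqq).add ht) ?_).cast (by ring) ?_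
      · filter_upwards [S.e1] with t ht
        rw [ht]; ring
      · field_simp
        ring
    obtain ⟨hq1, hp2⟩ := key S v1
    obtain ⟨hq2, hp1⟩ := key S.symm v2
    have hw3 : LC c (fun t => w t - A) (3 * k) (0 - 0) :=
      (hw.wk (by omega)).sub ((LC.const A).wk (by omega))
    have k1 := ((hq1.mul hp1).cast (m := 3 * k) (by ring) rfl).add
      ((hq2.mul hp2).cast (m := 3 * k) (by ring) rfl)
    have i3 := hw3.eqv (k1.smul 2) (by filter_upwards [S.e5] with t ht; rw [ht]; ring)
    field_simp at i3
    simp_all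

lemma Sys.caseB (S : Sys c a0 a1 A q1 p1 q2 p2 w) {n : ℤ} {P1 P2 : ℂ}
    (h1 : LC c p1 n P1) (h2 : LC c p2 0 P2) (hP1 : P1 ≠ 0)
    (hn : n < 0) : Good c q1 q2 := by
  have hc := S.hc
  have v := S.vpole hn hP1 h1
  have e1' : ∀ᶠ t in 𝓝[≠] c, t * deriv q1 t =
      q1 t * q1 t - q1 t * (2 * q1 t - w t) - t + 4 * (t * p2 t) := by
    filter_upwards [S.e1] with t ht
    rw [ht]; ring
  obtain ⟨_, _, hq0⟩ := S.mq1
  obtain ⟨_, _, hq20⟩ := S.mq2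
  rcases hq0.dich (-1) with ⟨x, hq⟩ | ⟨k, hk, x, hx, hq⟩
  swap
  · exfalso
    have R := ((((hq.mul hq).cast (m := 2 * k) (by ring) rfl).sub
      ((hq.mul v).wk (m := 2 * k) (by omega))).sub (LC.id.wk (m := 2 * k) (by omega))).add
      ((h2.idmul.smul 4).wk (m := 2 * k) (by omega))
    have := (hq.del.wk (m := 2 * k) (by omega)).eqv R e1'
    exact mul_ne_zero hx hx (by linear_combination -this)
  obtain ⟨x, rfl⟩ : ∃ z, x = c * z := ⟨x / c, by field_simp⟩
  have hx : x = 0 ∨ x = n - 1 := by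
    have R := ((((hq.mul hq).cast (m := -2) (by ring) rfl).sub
      ((hq.mul v).cast (m := -2) (by omega) rfl)).sub (LC.id.wk (m := -2) (by omega))).add
      ((h2.idmul.smul 4).wk (m := -2) (by omega))
    have := (hq.del.cast (m := -2) (by omega) rfl).eqv R e1'
    push_cast at this
    have h3 : c * c * (x * (x - (n - 1))) = 0 := by linear_combination -this
    have h4 : x * (x - (n - 1)) = 0 := by simpa [hc] using h3
    rcases mul_eq_zero.1 h4 with h | h
    · exact Or.inl h
    · exact Or.inr (by linear_combination h)
  have hw : LC c w (-1) (c * (2 * x - n)) := by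
    refine ((hq.smul 2).sub v).congr (by filter_upwards with t; ring) |>.cast rfl (by ring)
  have e5' : ∀ᶠ t in 𝓝[≠] c, q2 t * p2 t = 1 / 2 * (w t - A) - q1 t * p1 t := by
    filter_upwards [S.e5] with t ht
    rw [ht]; ring
  rcases hx with rfl | hx
  swap
  · exfalso
    have hx0 : x ≠ 0 := by
      rw [hx]
      have : ((n - 1 : ℤ) : ℂ) ≠ 0 := by
        exact_mod_cast (by omega : n - 1 ≠ 0)
      simpa using this
    have hw3 : LC c (fun t => w t - A) (n - 1) (0 - 0) :=
      (hw.wk (by omega)).sub ((LC.const A).wk (by omega))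
    have hX := ((hw3.smul (1/2)).sub ((hq.mul h1).cast (m := n - 1) (by ring) rfl)).congr e5'
    rcases hq20.dich n with ⟨y, hq2⟩ | ⟨k, hk, y, hy, hq2⟩
    · have := hX.uniq ((hq2.mul h2).wk (by omega))
      simp_all
    · have R := ((((hq2.mul hw).wk (m := 2 * k) (by omega)).sub
        ((hq2.mul hq2).cast (m := 2 * k) (by ring) rfl)).sub (LC.id.wk (m := 2 * k) (by omega))).add
        ((h1.idmul.smul 4).wk (m := 2 * k) (by omega))
      have := (hq2.del.wk (m := 2 * k) (by omega)).eqv R S.e3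
      exact mul_ne_zero hy hy (by linear_combination this)
  obtain ⟨r, hq'⟩ := (hq.cast (b := 0) rfl (by ring)).step
  norm_num at hq'
  have hw' : LC c w (-1) (c * (-n)) := hw.cast rfl (by ring)
  obtain ⟨d, hd⟩ := h2.del0
  rcases hq20.dich (-1) with ⟨y, hq2⟩ | ⟨k, hk, y, hy, hq2⟩
  swap
  · exfalso
    have hp1 : LC c p1 (2 * k) (y * y / (4 * c)) := by
      have g1 : LC c (fun t => 4 * t) 0 (4 * c) := LC.id.smul 4
      have hd := hq2.del.wk (m := 2 * k) (by omega)
      have hqw := (hq2.mul hw').wk (m := 2 * k) (by omega)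
      have hqq := (hq2.mul hq2).cast (m := 2 * k) (by ring) rfl
      have ht : LC c (fun t => t) (2 * k) 0 := LC.id.wk (by omega)
      refine (g1.div (by simpa using hc) (((hd.sub hqw).add hqq).add ht) ?_).cast (by ring) ?_
      · filter_upwards [S.e3] with t ht
        rw [ht]; ring
      · ring
    have hv2 : LC c (fun t => 2 * q2 t - w t) k (2 * y - 0) :=
      (hq2.smul 2).sub (hw'.wk (by omega))
    have hp2 := hv2.div (v := p2) (by simpa using hy) (hd.sub (LC.const a1)) (by
      filter_upwards [S.e4] with t ht
      rw [ht]; ring)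
    obtain ⟨b, hb⟩ := ((hq2.mul hp2).le (m := -1) (by omega))
    have hq1' := hp1.div (v := q1) (by simp [hy, hc])
      (((hw'.sub ((LC.const A).wk (m := -1) (by norm_num))).smul (1/2)).sub hb) (by
        filter_upwards [S.e5] with t ht
        rw [ht]; ring)
    have R := ((((hq1'.mul hw').wk (m := 0) (by omega)).sub
        ((hq1'.mul hq1').wk (m := 0) (by omega))).sub LC.id).add
        (((hp2.wk (m := 0) (by omega)).idmul.smul 4))
    have := (hq1'.del.wk (m := 0) (by omega)).eqv R S.e1
    exact hc (by linear_combination this)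
  obtain ⟨y, rfl⟩ : ∃ z, y = c * z := ⟨y / c, by field_simp⟩
  have r1 := S.symm.p2two hq2 hw'
  have b1 : -2 ≤ n := by
    by_contra hlt
    exact hP1 (h1.uniq (r1.wk (by omega)))
  obtain rfl | rfl : n = -1 ∨ n = -2 := by omega
  · have i1 := (h1.wk (m := -2) (by norm_num)).uniq r1
    have : c * (y * (y - 2)) = 0 := by
      push_cast at i1
      linear_combination -4 * i1
    rcases mul_eq_zero.1 this with h | h
    · exact absurd h hc
    rcases mul_eq_zero.1 h with h | h
    · exact ⟨0, 0, hq.cast rfl (by simp), hq2.cast rfl (by simp [h])⟩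
    · refine ⟨0, 2, hq.cast rfl (by simp), hq2.cast rfl ?_⟩
      push_cast
      linear_combination c * h
  · have i1 := h1.uniq r1
    push_cast at i1
    have hw2 : LC c (fun t => w t - A) (-2) (0 - 0) :=
      (hw.wk (by norm_num)).sub ((LC.const A).wk (by norm_num))
    have hr0 : r = 0 := by
      have := ((hq2.mul h2).wk (m := -2) (by norm_num)).eqv
        ((hw2.smul (1/2)).sub ((hq'.mul h1).cast (m := -2) (by norm_num) rfl)) e5'
      have h3 : r * P1 = 0 := by linear_combination this
      simpa [hP1] using h3
    subst hr0
    obtain ⟨s, hs⟩ := hq'.step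
    norm_num at hs
    have hw1 : LC c (fun t => w t - A) (-1) (c * 2 - 0) :=
      (hw'.cast rfl (by norm_num)).sub ((LC.const A).wk (by norm_num))
    have i2 := ((hq2.mul h2).cast (m := -1) (by norm_num) rfl).eqv
        ((hw1.smul (1/2)).sub ((hs.mul h1).cast (m := -1) (by norm_num) rfl)) e5'
    have i3 := (hs.del.cast (m := 0) (by norm_num) rfl).eqv
      (((((hs.mul hw').cast (m := 0) (by norm_num) rfl).sub
        ((hs.mul hs).wk (m := 0) (by omega))).sub LC.id).add (h2.idmul.smul 4)) S.e1
    have i4 := (hd.wk (m := -1) (by norm_num)).eqv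
      (((((hq2.mul h2).cast (m := -1) (by norm_num) rfl).smul 2).sub
        ((h2.mul hw').cast (m := -1) (by norm_num) rfl)).add
        ((LC.const a1).wk (m := -1) (by norm_num))) S.e4
    push_cast at i2 i3 i4
    have hs1 : s = 1 - 4 * P2 := by
      have : c * (s - (1 - 4 * P2)) = 0 := by linear_combination -i3
      rcases mul_eq_zero.1 this with h | h
      · exact absurd h hc
      · linear_combination h
    have i5 : P2 * (y - 1) = 0 := by
      have : c * (P2 * (y - 1)) = 0 := by linear_combination -i4 / 2
      simpa [hc] using this
    rcases mul_eq_zero.1 i5 with h | h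
    · subst h
      have hP : P1 = c := by
        rw [hs1] at i2
        linear_combination i2
      rw [hP] at i1
      have : c * ((y - 4) * (y + 1)) = 0 := by linear_combination -4 * i1
      rcases mul_eq_zero.1 this with h | h
      · exact absurd h hc
      rcases mul_eq_zero.1 h with h | h
      · refine ⟨0, 4, hq.cast rfl (by simp), hq2.cast rfl ?_⟩
        push_cast
        linear_combination c * h
      · refine ⟨0, -1, hq.cast rfl (by simp), hq2.cast rfl ?_⟩
        push_cast
        linear_combination c * h
    · refine ⟨0, 1, hq.cast rfl (by simp), hq2.cast rfl ?_⟩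
      push_cast
      linear_combination c * h

lemma Sys.big (S : Sys c a0 a1 A q1 p1 q2 p2 w) {P1 P2 : ℂ} {k : ℤ} {x : ℂ}
    (h1 : LC c p1 0 P1) (h2 : LC c p2 0 P2) (hk : k < -1) (hx : x ≠ 0) (hq : LC c q1 k x) :
    (∃ b, LC c (fun t => q1 t * p1 t) (-1) b) ∧ LC c w k x := by
  have hu : LC c (fun t => w t - q1 t) (-1) (c * (k * x) / x) := by
    have hd : LC c (fun t => t * deriv q1 t + t - 4 * (t * p2 t)) (k - 1) (c * (k * x) + 0 - 0) :=
      (hq.del.add (LC.id.wk (by omega))).sub ((h2.idmul.smul 4).wk (by omega))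
    refine (hq.div hx hd ?_).cast (by ring) (by ring)
    filter_upwards [S.e1] with t ht
    rw [ht]; ring
  obtain ⟨d, hd⟩ := h1.del0
  have hv := (hq.sub (hu.wk hk))
  have hp := hv.div (v := p1) (by simpa using hx) (hd.sub (LC.const a0)) (by
    filter_upwards [S.e2] with t ht
    rw [ht]; ring)
  refine ⟨(hq.mul hp).le (by omega), ?_⟩
  exact (hq.add (hu.wk hk)).congr (by filter_upwards with t; ring) |>.cast rfl (by ring)

lemma Sys.caseC (S : Sys c a0 a1 A q1 p1 q2 p2 w) {P1 P2 : ℂ}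
    (h1 : LC c p1 0 P1) (h2 : LC c p2 0 P2) : Good c q1 q2 := by
  have hc := S.hc
  have key : ∀ {a0 a1 : ℂ} {q1 p1 q2 p2 : ℂ → ℂ} {P1 P2 : ℂ}, Sys c a0 a1 A q1 p1 q2 p2 w →
      LC c p1 0 P1 → LC c p2 0 P2 → (∃ b, LC c (fun t => q1 t * p1 t) (-1) b) := by
    intro a0 a1 q1 p1 q2 p2 P1 P2 S h1 h2
    obtain ⟨_, _, hq0⟩ := S.mq1
    rcases hq0.dich (-1) with ⟨x, hq⟩ | ⟨k, hk, x, hx, hq⟩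
    · exact ⟨_, (hq.mul h1).cast (by norm_num) rfl⟩
    · exact (S.big h1 h2 hk hx hq).1
  obtain ⟨b1, hb1⟩ := key S h1 h2
  obtain ⟨b2, hb2⟩ := key S.symm h2 h1
  have hw0 := (((hb1.add hb2).smul 2).add ((LC.const A).wk (m := -1) (by norm_num))).congr S.e5
  obtain ⟨z, hz⟩ : ∃ z, 2 * (b1 + b2) + 0 = c * z := ⟨(2 * (b1 + b2) + 0) / c, by field_simp⟩
  rw [hz] at hw0
  have key2 : ∀ {a0 a1 : ℂ} {q1 p1 q2 p2 : ℂ → ℂ} {P1 P2 : ℂ}, Sys c a0 a1 A q1 p1 q2 p2 w →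
      LC c p1 0 P1 → LC c p2 0 P2 → ∃ x, LC c q1 (-1) (c * x) ∧ (x = 0 ∨ x = z + 1) ∧
        P1 * (2 * x - z) = 0 := by
    intro a0 a1 q1 p1 q2 p2 P1 P2 S h1 h2
    obtain ⟨_, _, hq0⟩ := S.mq1
    rcases hq0.dich (-1) with ⟨x, hq⟩ | ⟨k, hk, x, hx, hq⟩
    · obtain ⟨x, rfl⟩ : ∃ z, x = c * z := ⟨x / c, by field_simp⟩
      refine ⟨x, hq, ?_, ?_⟩
      · have r := S.p2two hq hw0
        have i := (h2.wk (m := -2) (by norm_num)).uniq r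
        have h3 : c * (x * (x - (z + 1))) = 0 := by linear_combination -4 * i
        have h4 : x * (x - (z + 1)) = 0 := by simpa [hc] using h3
        rcases mul_eq_zero.1 h4 with h | h
        · exact Or.inl h
        · exact Or.inr (by linear_combination h)
      · obtain ⟨d, hd⟩ := h1.del0
        have i4 := (hd.wk (m := -1) (by norm_num)).eqv
          (((((hq.mul h1).cast (m := -1) (by norm_num) rfl).smul 2).sub
          ((h1.mul hw0).cast (m := -1) (by norm_num) rfl)).add
          ((LC.const a0).wk (m := -1) (by norm_num))) S.e2
        have h3 : c * (P1 * (2 * x - z)) = 0 := by linear_combination -i4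
        simpa [hc] using h3
    · exact absurd ((S.big h1 h2 hk hx hq).2.uniq (hw0.wk hk)) hx
  obtain ⟨x1, hq1, hx1, hp1⟩ := key2 S h1 h2
  obtain ⟨x2, hq2, hx2, hp2⟩ := key2 S.symm h2 h1
  have hzz : z = 2 * (x1 * P1 + x2 * P2) := by
    have := hw0.eqv (((((hq1.mul h1).cast (m := -1) (by norm_num) rfl).add
      ((hq2.mul h2).cast (m := -1) (by norm_num) rfl)).smul 2).add
      ((LC.const A).wk (m := -1) (by norm_num))) S.e5
    have h3 : c * (z - 2 * (x1 * P1 + x2 * P2)) = 0 := by linear_combination this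
    rcases mul_eq_zero.1 h3 with h | h
    · exact absurd h hc
    · linear_combination h
  have hzint : ∃ m : ℤ, z = m := by
    by_cases hz0 : z = 0
    · exact ⟨0, by simp [hz0]⟩
    refine ⟨-2, ?_⟩
    push_cast
    have aux : ∀ {x P : ℂ}, (x = 0 ∨ x = z + 1) → P * (2 * x - z) = 0 → x * P ≠ 0 → z = -2 := by
      intro x P hx hp hne
      rcases hx with h | h
      · simp [h] at hne
      · rcases mul_eq_zero.1 hp with h' | h'
        · simp [h'] at hne
        · rw [h] at h'
          linear_combination h'
    by_cases g1 : x1 * P1 = 0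
    · by_cases g2 : x2 * P2 = 0
      · exact absurd (by rw [hzz, g1, g2]; ring) hz0
      · exact aux hx2 hp2 g2
    · exact aux hx1 hp1 g1
  obtain ⟨m, rfl⟩ := hzint
  have fin : ∀ {x : ℂ}, (x = 0 ∨ x = m + 1) → ∃ k : ℤ, x = k := by
    rintro x (rfl | rfl)
    · exact ⟨0, by simp⟩
    · exact ⟨m + 1, by push_cast; ring⟩
  obtain ⟨k1, rfl⟩ := fin hx1
  obtain ⟨k2, rfl⟩ := fin hx2
  exact ⟨k1, k2, hq1, hq2⟩

lemma Sys.good (S : Sys c a0 a1 A q1 p1 q2 p2 w) : Good c q1 q2 := by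
  obtain ⟨_, _, h1⟩ := S.mp1
  obtain ⟨_, _, h2⟩ := S.mp2
  rcases h1.dich 0 with ⟨P1, h1⟩ | ⟨n1, hn1, P1, hP1, h1⟩
  · rcases h2.dich 0 with ⟨P2, h2⟩ | ⟨n2, hn2, P2, hP2, h2⟩
    · exact S.caseC h1 h2
    · exact (S.symm.caseB h2 h1 hP2 hn2).symm
  · rcases h2.dich 0 with ⟨P2, h2⟩ | ⟨n2, hn2, P2, hP2, h2⟩
    · exact S.caseB h1 h2 hP1 hn1
    · exact S.caseA h1 h2 hP1 hP2 hn1 hn2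

end SysSec


lemma ev_noPole (f : RatFunc ℂ) (c : ℂ) : ∀ᶠ t in 𝓝[≠] c, NoPoleAt f t := by
  have h : {t | f.denom.eval t = 0}.Finite := by
    refine (f.denom.roots.toFinset.finite_toSet).subset fun t ht => ?_
    simpa [f.denom_ne_zero] using ht
  have h2 : ({t | f.denom.eval t = 0} \ {c})ᶜ ∈ 𝓝 c :=
    (h.subset Set.sdiff_subset).isClosed.isOpen_compl.mem_nhds (by simp)
  filter_upwards [mem_nhdsWithin_of_mem_nhds h2, self_mem_nhdsWithin] with t h1 h3 h4
  exact h1 ⟨h4, h3⟩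

lemma analyticAt_polyEval (p : ℂ[X]) (c : ℂ) : AnalyticAt ℂ (fun t => p.eval t) c := by
  simpa using AnalyticAt.aeval_polynomial (A := ℂ) (f := fun t : ℂ => t) analyticAt_id p

lemma LC.polyEval (p : ℂ[X]) (c : ℂ) : LC c (fun t => p.eval t) 0 (p.eval c) :=
  ⟨_, analyticAt_polyEval p c, rfl, by simp⟩

lemma evR_mero (f : RatFunc ℂ) (c : ℂ) : MeromorphicAt (evR f) c :=
  (analyticAt_polyEval f.num c).meromorphicAt.fun_div (analyticAt_polyEval f.denom c).meromorphicAt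

lemma noPole_of_LC {q : RatFunc ℂ} {c r : ℂ} (h : LC c (evR q) (-1) r) :
    NoPoleAt (q - RatFunc.C r / (RatFunc.X - RatFunc.C c)) c := by
  set g := q - RatFunc.C r / (RatFunc.X - RatFunc.C c) with hg
  have hX : (X - C c : ℂ[X]) ≠ 0 := X_sub_C_ne_zero c
  have hX' : (RatFunc.X - RatFunc.C c : RatFunc ℂ) ≠ 0 := by
    have := RatFunc.algebraMap_ne_zero hX
    simpa using this
  have hpoly : g.num * (q.denom * (X - C c)) =
      (q.num * (X - C c) - C r * q.denom) * g.denom := by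
    rw [RatFunc.num_mul_eq_mul_denom_iff (mul_ne_zero q.denom_ne_zero hX), hg]
    have hd := RatFunc.algebraMap_ne_zero q.denom_ne_zero
    nth_rewrite 1 [← RatFunc.num_div_denom q]
    simp only [map_mul, map_sub, RatFunc.algebraMap_X, RatFunc.algebraMap_C]
    field_simp
  have hgv : ∀ᶠ t in 𝓝[≠] c, evR g t = evR q t - r * (t - c) ^ (-1 : ℤ) := by
    filter_upwards [ev_noPole q c, ev_noPole g c, ev_ne c] with t h1 h2 h3
    have h1' : q.denom.eval t ≠ 0 := h1
    have h2' : g.denom.eval t ≠ 0 := h2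
    have e := congrArg (Polynomial.eval t) hpoly
    simp only [eval_mul, eval_sub, eval_X, eval_C] at e
    unfold evR
    rw [zpow_neg_one]
    field_simp
    linear_combination e
  have hp : LC c (fun t => r * (t - c) ^ (-1 : ℤ)) (-1) r :=
    ⟨fun _ => r, analyticAt_const, rfl, by filter_upwards with t; ring⟩
  obtain ⟨b, hb⟩ := (((h.sub hp).congr hgv).cast (b := 0) rfl (by ring)).step
  norm_num at hb
  intro h0
  have e := (LC.polyEval g.num c).eqv ((hb.mul (LC.polyEval g.denom c)).cast (m := 0) rfl rfl) (by
    filter_upwards [ev_noPole g c] with t ht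
    have ht' : g.denom.eval t ≠ 0 := ht
    unfold evR
    field_simp)
  obtain ⟨u, v, huv⟩ := RatFunc.isCoprime_num_denom g
  have := congrArg (Polynomial.eval c) huv
  simp only [eval_add, eval_mul, eval_one, e, h0] at this
  simp at this

theorem sasano_q1_q2_simple_poles_integer_residues (a0 a1 a2 a3 : ℂ)
    (hpar : a0 + a1 + 2 * a2 + a3 = 1 / 2)
    (q1 p1 q2 p2 : RatFunc ℂ)
    (hsol : IsSasanoSol a0 a1 a3 q1 p1 q2 p2)
    (c : ℂ) (hc : c ≠ 0) :
    ∃ m n : ℤ,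
      NoPoleAt (q1 - RatFunc.C ((m : ℂ) * c) / (RatFunc.X - RatFunc.C c)) c ∧
      NoPoleAt (q2 - RatFunc.C ((n : ℂ) * c) / (RatFunc.X - RatFunc.C c)) c := by
  have S : Sys c a0 a1 (a0 + a1 + a3) (evR q1) (evR p1) (evR q2) (evR p2)
      (fun t => 2 * (evR q1 t * evR p1 t + evR q2 t * evR p2 t) + (a0 + a1 + a3)) := by
    have hall : ∀ᶠ t in 𝓝[≠] c, NoPoleAt q1 t ∧ NoPoleAt p1 t ∧ NoPoleAt q2 t ∧ NoPoleAt p2 t := by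
      filter_upwards [ev_noPole q1 c, ev_noPole p1 c, ev_noPole q2 c, ev_noPole p2 c]
        with t h1 h2 h3 h4
      exact ⟨h1, h2, h3, h4⟩
    have m1 := evR_mero q1 c
    have m2 := evR_mero p1 c
    have m3 := evR_mero q2 c
    have m4 := evR_mero p2 c
    refine ⟨hc, LC.exists m1, LC.exists m2, LC.exists m3, LC.exists m4, LC.exists (by fun_prop),
      ?_, ?_, ?_, ?_, ?_⟩
    · filter_upwards [hall] with t ht
      linear_combination (hsol t ht.1 ht.2.1 ht.2.2.1 ht.2.2.2).1
    · filter_upwards [hall] with t ht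
      linear_combination (hsol t ht.1 ht.2.1 ht.2.2.1 ht.2.2.2).2.1
    · filter_upwards [hall] with t ht
      linear_combination (hsol t ht.1 ht.2.1 ht.2.2.1 ht.2.2.2).2.2.1
    · filter_upwards [hall] with t ht
      linear_combination (hsol t ht.1 ht.2.1 ht.2.2.1 ht.2.2.2).2.2.2
    · filter_upwards with t
      rfl
  obtain ⟨m, n, h1, h2⟩ := S.good
  exact ⟨m, n, noPole_of_LC (h1.cast rfl (mul_comm _ _)), noPole_of_LC (h2.cast rfl (mul_comm _ _))⟩
end

section
/- Let (q1,p1,q2,p2) be a rational solution of A5^(2)(α0,α1,α2,α3). Then q1 and q2 have no pole at 0, and (−2α0+α3) − q1(0) ∈ ℤ and (−2α1+α3) − q2(0) ∈ ℤ (that is, the limit of q1 at infinity differs from its value at 0 by an integer, and similarly for q2). -/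
open Filter Topology Polynomial

namespace Sasano

/-- `f = a z^n + higher order terms` near `0` (on a punctured neighbourhood). -/
def Lead (n : ℤ) (f : ℂ → ℂ) (a : ℂ) : Prop :=
  ∃ g : ℂ → ℂ, AnalyticAt ℂ g 0 ∧ g 0 = a ∧ ∀ᶠ z in 𝓝[≠] (0:ℂ), f z = z ^ n * g z

/-- `f` has order at least `n` at `0`. -/
def Ord (n : ℤ) (f : ℂ → ℂ) : Prop := ∃ a, Lead n f a

lemma ne_ev : ∀ᶠ z in 𝓝[≠] (0:ℂ), z ≠ 0 := eventually_mem_nhdsWithin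

lemma Lead.ord {n f a} (h : Lead n f a) : Ord n f := ⟨a, h⟩

lemma Lead.to {n m f a b} (h : Lead n f a) (hn : n = m) (ha : a = b) : Lead m f b := by
  subst hn; subst ha; exact h

lemma Lead.congr {n f g a} (h : Lead n f a) (hfg : ∀ᶠ z in 𝓝[≠] (0:ℂ), g z = f z) :
    Lead n g a := by
  obtain ⟨u, hu, hu0, hf⟩ := h
  refine ⟨u, hu, hu0, ?_⟩
  filter_upwards [hf, hfg] with z h1 h2
  rw [h2, h1]

lemma Ord.congr {n f g} (h : Ord n f) (hfg : ∀ᶠ z in 𝓝[≠] (0:ℂ), g z = f z) : Ord n g := by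
  obtain ⟨a, h⟩ := h
  exact ⟨a, h.congr hfg⟩

lemma Lead.add {n f g a b} (h : Lead n f a) (h' : Lead n g b) :
    Lead n (fun z => f z + g z) (a + b) := by
  obtain ⟨u, hu, hu0, hf⟩ := h
  obtain ⟨v, hv, hv0, hg⟩ := h'
  refine ⟨fun z => u z + v z, hu.add hv, by simp [hu0, hv0], ?_⟩
  filter_upwards [hf, hg] with z h1 h2
  rw [h2, h1]; ring

lemma Lead.mul {n m f g a b} (h : Lead n f a) (h' : Lead m g b) :
    Lead (n + m) (fun z => f z * g z) (a * b) := by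
  obtain ⟨u, hu, hu0, hf⟩ := h
  obtain ⟨v, hv, hv0, hg⟩ := h'
  refine ⟨fun z => u z * v z, hu.mul hv, by simp [hu0, hv0], ?_⟩
  filter_upwards [hf, hg, ne_ev] with z h1 h2 h3
  rw [h2, h1, zpow_add₀ h3]; ring

lemma Lead.const (a : ℂ) : Lead 0 (fun _ => a) a :=
  ⟨fun _ => a, analyticAt_const, rfl, by simp⟩

lemma Lead.smul {n f a} (c : ℂ) (h : Lead n f a) : Lead n (fun z => c * f z) (c * a) :=
  ((Lead.const c).mul h).to (by simp) rfl

lemma Lead.sub {n f g a b} (h : Lead n f a) (h' : Lead n g b) :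
    Lead n (fun z => f z - g z) (a - b) :=
  ((h.add (h'.smul (-1))).to rfl (by ring)).congr (by filter_upwards with z; ring)

lemma Lead.zpow (n : ℤ) : Lead n (fun z => z ^ n) 1 :=
  ⟨fun _ => 1, analyticAt_const, rfl, by simp⟩

lemma Lead.low {n m f a} (h : Lead n f a) (hm : m < n) : Lead m f 0 := by
  obtain ⟨u, hu, hu0, hf⟩ := h
  obtain ⟨k, hk⟩ : ∃ k : ℕ, n = m + (k + 1 : ℕ) := ⟨(n - m - 1).toNat, by omega⟩
  refine ⟨fun z => z ^ (k + 1) * u z, (analyticAt_id.pow _).mul hu, by simp, ?_⟩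
  filter_upwards [hf, ne_ev] with z h1 h3
  rw [h1, hk, zpow_add₀ h3, zpow_natCast]; ring

lemma Ord.mono {n f} (h : Ord n f) {m : ℤ} (hm : m ≤ n) : Ord m f := by
  obtain ⟨a, h⟩ := h
  rcases hm.lt_or_eq with h1 | h1
  · exact ⟨0, h.low h1⟩
  · exact ⟨a, h1 ▸ h⟩

lemma Ord.low {n f} (h : Ord n f) {m : ℤ} (hm : m < n) : Lead m f 0 := by
  obtain ⟨a, h⟩ := h
  exact h.low hm

lemma Lead.raise {n f} (h : Lead n f 0) : Ord (n + 1) f := by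
  obtain ⟨u, hu, hu0, hf⟩ := h
  refine ⟨dslope u 0 0, dslope u 0, ?_, rfl, ?_⟩
  · obtain ⟨p, hp⟩ := hu
    exact ⟨_, hp.has_fpower_series_dslope_fslope⟩
  · filter_upwards [hf, ne_ev] with z h1 h3
    rw [h1, dslope_of_ne _ h3, slope_def_field, hu0, zpow_add₀ h3]
    field_simp
    simp [mul_comm]

lemma Lead.uniq {n f a b} (h : Lead n f a) (h' : Lead n f b) : a = b := by
  obtain ⟨u, hu, hu0, hf⟩ := h
  obtain ⟨v, hv, hv0, hg⟩ := h'
  have h1 : Tendsto u (𝓝[≠] 0) (𝓝 a) := hu0 ▸ hu.continuousAt.tendsto.mono_left nhdsWithin_le_nhds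
  have h2 : Tendsto v (𝓝[≠] 0) (𝓝 b) := hv0 ▸ hv.continuousAt.tendsto.mono_left nhdsWithin_le_nhds
  refine tendsto_nhds_unique h1 (h2.congr' ?_)
  filter_upwards [hf, hg, ne_ev] with z h1 h2 h3
  rw [h1] at h2
  exact (mul_left_cancel₀ (zpow_ne_zero n h3) h2).symm

lemma Lead.zero_of {n m f a} (h : Lead n f a) (h' : Ord m f) (hm : n < m) : a = 0 :=
  h.uniq (h'.low hm)

lemma Lead.order_eq {n m f a b} (h : Lead n f a) (ha : a ≠ 0) (h' : Lead m f b) (hb : b ≠ 0) :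
    n = m := by
  rcases lt_trichotomy n m with h1 | h1 | h1
  · exact absurd (h.zero_of h'.ord h1) ha
  · exact h1
  · exact absurd (h'.zero_of h.ord h1) hb

lemma Lead.div {k n f g a b} (h : Lead k (fun z => f z * g z) b) (hf : Lead n f a) (ha : a ≠ 0) :
    Lead (k - n) g (b / a) := by
  obtain ⟨u, hu, hu0, hf⟩ := hf
  obtain ⟨v, hv, hv0, hg⟩ := h
  have hne : u 0 ≠ 0 := hu0 ▸ ha
  refine ⟨fun z => v z / u z, hv.div hu hne, by simp [hu0, hv0], ?_⟩
  have : ∀ᶠ z in 𝓝[≠] (0:ℂ), u z ≠ 0 :=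
    (hu.continuousAt.eventually_ne hne).filter_mono nhdsWithin_le_nhds
  filter_upwards [hf, hg, ne_ev, this] with z h1 h2 h3 h4
  simp only [h1] at h2
  have h5 := zpow_ne_zero n h3
  rw [zpow_sub₀ h3]
  field_simp
  linear_combination h2

lemma Ord.add {n f g} (h : Ord n f) (h' : Ord n g) : Ord n (fun z => f z + g z) := by
  obtain ⟨a, h⟩ := h
  obtain ⟨b, h'⟩ := h'
  exact ⟨_, h.add h'⟩

lemma Ord.sub {n f g} (h : Ord n f) (h' : Ord n g) : Ord n (fun z => f z - g z) := by
  obtain ⟨a, h⟩ := h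
  obtain ⟨b, h'⟩ := h'
  exact ⟨_, h.sub h'⟩

lemma Ord.mul {n m f g} (h : Ord n f) (h' : Ord m g) : Ord (n + m) (fun z => f z * g z) := by
  obtain ⟨a, h⟩ := h
  obtain ⟨b, h'⟩ := h'
  exact ⟨_, h.mul h'⟩

lemma Ord.smul {n f} (c : ℂ) (h : Ord n f) : Ord n (fun z => c * f z) := by
  obtain ⟨a, h⟩ := h
  exact ⟨_, h.smul c⟩

lemma Ord.const (c : ℂ) : Ord 0 (fun _ => c) := ⟨_, Lead.const c⟩

lemma Ord.div {k n f g a} (h : Ord k (fun z => f z * g z)) (hf : Lead n f a) (ha : a ≠ 0) :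
    Ord (k - n) g := by
  obtain ⟨b, h⟩ := h
  exact ⟨_, h.div hf ha⟩

lemma cases_zero {f} (hf : MeromorphicAt f 0) :
    Ord 0 f ∨ ∃ n : ℤ, n < 0 ∧ ∃ a, a ≠ 0 ∧ Lead n f a := by
  by_cases h : meromorphicOrderAt f 0 = ⊤
  · left
    rw [meromorphicOrderAt_eq_top_iff] at h
    exact ⟨0, fun _ => 0, analyticAt_const, rfl, by filter_upwards [h] with z hz; simp [hz]⟩
  · obtain ⟨n, hn⟩ := WithTop.ne_top_iff_exists.mp h
    obtain ⟨g, hg, hg0, hfg⟩ := (meromorphicOrderAt_eq_int_iff hf).1 hn.symm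
    have hl : Lead n f (g 0) := ⟨g, hg, rfl, by
      filter_upwards [hfg] with z hz; simpa using hz⟩
    rcases lt_or_ge n 0 with h1 | h1
    · exact Or.inr ⟨n, h1, _, hg0, hl⟩
    · exact Or.inl (hl.ord.mono h1)

lemma Lead.deriv {n f a} (h : Lead n f a) : Lead (n - 1) (deriv f) (n * a) := by
  obtain ⟨u, hu, hu0, hf⟩ := h
  refine ⟨fun z => n * u z + z * _root_.deriv u z, ?_, by simp [hu0], ?_⟩
  · exact (analyticAt_const.mul hu).add (analyticAt_id.mul hu.deriv)
  · have h1 : ∀ᶠ z in 𝓝[≠] (0:ℂ), AnalyticAt ℂ u z :=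
      hu.eventually_analyticAt.filter_mono nhdsWithin_le_nhds
    have h2 := Filter.EventuallyEq.nhdsNE_deriv hf
    filter_upwards [h1, h2, ne_ev] with z h3 h4 h5
    rw [h4]
    have h6 : HasDerivAt (fun z => z ^ n * u z)
        (n * z ^ (n - 1) * u z + z ^ n * _root_.deriv u z) z :=
      (hasDerivAt_zpow n z (Or.inl h5)).mul h3.differentiableAt.hasDerivAt
    rw [h6.deriv]
    have : z ^ n = z ^ (n-1) * z := by rw [← zpow_add_one₀ h5]; simp
    rw [this]; ring

lemma Ord.deriv0 {f} (h : Ord 0 f) : Ord 0 (deriv f) := by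
  obtain ⟨a, h⟩ := h
  have := (h.deriv.to (b := 0) rfl (by simp)).raise
  simpa using this

lemma deriv_add_ev {f g : ℂ → ℂ} (hf : MeromorphicAt f 0) (hg : MeromorphicAt g 0) :
    ∀ᶠ z in 𝓝[≠] (0:ℂ), deriv (fun z => f z + g z) z = deriv f z + deriv g z := by
  filter_upwards [hf.eventually_analyticAt, hg.eventually_analyticAt] with z h1 h2
  exact deriv_fun_add h1.differentiableAt h2.differentiableAt

lemma deriv_sub_ev {f g : ℂ → ℂ} (hf : MeromorphicAt f 0) (hg : MeromorphicAt g 0) :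
    ∀ᶠ z in 𝓝[≠] (0:ℂ), deriv (fun z => f z - g z) z = deriv f z - deriv g z := by
  filter_upwards [hf.eventually_analyticAt, hg.eventually_analyticAt] with z h1 h2
  exact deriv_fun_sub h1.differentiableAt h2.differentiableAt

/-- The Sasano system in a local coordinate. -/
structure Sys (τ T : ℂ → ℂ) (a0 a1 a3 : ℂ) (q1 p1 q2 p2 w f : ℂ → ℂ) : Prop where
  mq1 : MeromorphicAt q1 0
  mp1 : MeromorphicAt p1 0
  mq2 : MeromorphicAt q2 0
  mp2 : MeromorphicAt p2 0
  hw : ∀ z, w z = (a0 + a1 + a3) + 2 * (q1 z * p1 z) + 2 * (q2 z * p2 z)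
  hf : ∀ z, f z = p1 z + p2 z - 1
  e1 : ∀ᶠ z in 𝓝[≠] (0:ℂ), τ z * deriv q1 z = q1 z * (w z - q1 z) - T z * (1 - 4 * p2 z)
  e2 : ∀ᶠ z in 𝓝[≠] (0:ℂ), τ z * deriv p1 z = p1 z * (2 * q1 z - w z) + a0
  e3 : ∀ᶠ z in 𝓝[≠] (0:ℂ), τ z * deriv q2 z = q2 z * (w z - q2 z) - T z * (1 - 4 * p1 z)
  e4 : ∀ᶠ z in 𝓝[≠] (0:ℂ), τ z * deriv p2 z = p2 z * (2 * q2 z - w z) + a1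

variable {τ T : ℂ → ℂ} {a0 a1 a3 : ℂ} {q1 p1 q2 p2 w f : ℂ → ℂ}

lemma Sys.swap (S : Sys τ T a0 a1 a3 q1 p1 q2 p2 w f) : Sys τ T a1 a0 a3 q2 p2 q1 p1 w f where
  mq1 := S.mq2
  mp1 := S.mp2
  mq2 := S.mq1
  mp2 := S.mp1
  hw z := by rw [S.hw]; ring
  hf z := by rw [S.hf]; ring
  e1 := S.e3
  e2 := S.e4
  e3 := S.e1
  e4 := S.e2

lemma Sys.mw (S : Sys τ T a0 a1 a3 q1 p1 q2 p2 w f) : MeromorphicAt w 0 := by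
  rw [funext S.hw]
  exact ((MeromorphicAt.const _ _).add ((MeromorphicAt.const _ _).mul (S.mq1.mul S.mp1))).add
    ((MeromorphicAt.const _ _).mul (S.mq2.mul S.mp2))

lemma Sys.mf (S : Sys τ T a0 a1 a3 q1 p1 q2 p2 w f) : MeromorphicAt f 0 := by
  rw [funext S.hf]
  exact (S.mp1.add S.mp2).sub (MeromorphicAt.const _ _)

lemma Sys.e5 (S : Sys τ T a0 a1 a3 q1 p1 q2 p2 w f) :
    ∀ᶠ z in 𝓝[≠] (0:ℂ), τ z * deriv f z = f z * ((-1) * w z) + (-a3) := by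
  have h : f = fun z => (p1 z + p2 z) - 1 := funext S.hf
  filter_upwards [deriv_add_ev S.mp1 S.mp2, S.e2, S.e4] with z h1 h2 h3
  have h4 : deriv f z = deriv p1 z + deriv p2 z := by
    rw [h, deriv_sub_const_fun, h1]
  rw [h4, mul_add, h2, h3, S.hf, S.hw]; ring


/-- Order-preserving derivations. -/
def DPres (τ : ℂ → ℂ) (ε : ℂ) : Prop :=
  ∀ n f a, Lead n f a → Lead n (fun z => τ z * deriv f z) (ε * n * a)

lemma DPres.ord {ε : ℂ} (hD : DPres τ ε) {n f} (h : Ord n f) :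
    Ord n (fun z => τ z * deriv f z) := by
  obtain ⟨a, h⟩ := h
  exact ⟨_, hD _ _ _ h⟩

lemma pole_reg {n f a} (hn : n < 0) (ha : a ≠ 0) (h : Lead n f a) (h' : Ord 0 f) : False :=
  ha (h.zero_of h' hn)

lemma logder {ε : ℂ} (hD : DPres τ ε) {n : ℤ} {p g : ℂ → ℂ} {a b : ℂ} (hn : n < 0) (ha : a ≠ 0)
    (hp : Lead n p a) (h : ∀ᶠ z in 𝓝[≠] (0:ℂ), τ z * deriv p z = p z * g z + b) : Ord 0 g := by
  have h1 : Ord n (fun z => p z * g z) := by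
    refine ((hD.ord hp.ord).sub ((Ord.const b).mono hn.le)).congr ?_
    filter_upwards [h] with z hz
    rw [hz]; ring
  exact (h1.div hp ha).mono (by omega)

/-- If `w` is regular and `p2` is regular then `q1` is regular. -/
lemma Sys.q1_reg (S : Sys τ T a0 a1 a3 q1 p1 q2 p2 w f) {ε : ℂ} (hD : DPres τ ε)
    (hT : Ord (-1) T) (hw : Ord 0 w) (hp2 : Ord 0 p2) : Ord 0 q1 := by
  rcases cases_zero S.mq1 with h | ⟨n, hn, a, ha, h⟩
  · exact h
  · exfalso
    have h1 : Ord n (fun z => q1 z * q1 z) := by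
      refine ((((h.ord.mul hw).mono (by omega)).sub (hD.ord h.ord)).sub
        ((hT.mul ((Ord.const 1).sub (hp2.smul 4))).mono (by omega))).congr ?_
      filter_upwards [S.e1] with z hz
      rw [hz]; ring
    have := (h.mul h).zero_of h1 (by omega)
    simp_all

lemma Sys.f_reg (S : Sys τ T a0 a1 a3 q1 p1 q2 p2 w f) {ε : ℂ} (hD : DPres τ ε)
    {N : ℤ} {ω : ℂ} (hN : N < 0) (hω : ω ≠ 0) (hw : Lead N w ω) : Ord 0 f := by
  rcases cases_zero S.mf with h | ⟨n, hn, a, ha, h⟩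
  · exact h
  · exfalso
    have h1 := (logder hD hn ha h S.e5).smul (-1)
    exact pole_reg hN hω hw (h1.congr (by filter_upwards with z; ring))

lemma Sys.f_ord (S : Sys τ T a0 a1 a3 q1 p1 q2 p2 w f) {ε : ℂ} (hD : DPres τ ε)
    {N : ℤ} {ω : ℂ} (hN : N < 0) (hω : ω ≠ 0) (hw : Lead N w ω) : Ord (-N) f := by
  have hf := S.f_reg hD hN hω hw
  have h1 : Ord 0 (fun z => w z * f z) := by
    refine (((Ord.const (-a3)).sub (hD.ord hf))).congr ?_
    filter_upwards [S.e5] with z hz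
    rw [hz]; ring
  exact (h1.div hw hω).mono (by omega)

/-- If `w` has a pole then `p1` is regular. -/
lemma Sys.p1_reg (S : Sys τ T a0 a1 a3 q1 p1 q2 p2 w f) {ε : ℂ} (hD : DPres τ ε)
    (hT : Ord (-1) T) {N : ℤ} {ω : ℂ} (hN : N < 0) (hω : ω ≠ 0) (hw : Lead N w ω) :
    Ord 0 p1 := by
  have hf := S.f_reg hD hN hω hw
  rcases cases_zero S.mp1 with h | ⟨k, hk, a, ha, h⟩
  · exact h
  · exfalso
    have h2 : Lead k p2 (-a) := by
      refine ((((hf.add (Ord.const 1)).low hk).sub h).to rfl (by ring)).congr ?_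
      filter_upwards with z
      rw [S.hf]; ring
    have g1 := logder hD hk ha h S.e2
    have g2 := logder hD hk (neg_ne_zero.2 ha) h2 S.e4
    have l1 : Lead N q1 (ω / 2) := by
      refine ((((g1.low hN).add hw).smul (1/2)).to rfl (by ring)).congr ?_
      filter_upwards with z; ring
    have l2 : Lead N q2 (ω / 2) := by
      refine ((((g2.low hN).add hw).smul (1/2)).to rfl (by ring)).congr ?_
      filter_upwards with z; ring
    have h3 := (l1.mul (hw.sub l1)).add (l2.mul (hw.sub l2))
    have h4 : Ord (2 * N + 1) (fun z => q1 z * (w z - q1 z) + q2 z * (w z - q2 z)) := by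
      have hTf := (hT.mul ((hf.smul 4).add (Ord.const 2)))
      refine ((((hD.ord l1.ord).mono (by omega)).add ((hD.ord l2.ord).mono (by omega))).sub
        (hTf.mono (by omega))).congr ?_
      filter_upwards [S.e1, S.e3] with z h1 h2
      rw [h1, h2, S.hf]; ring
    have h5 := h3.zero_of h4 (by omega)
    apply hω
    have : ω ^ 2 = 0 := by linear_combination 2 * h5
    simpa using this

/-- Place `0`: if `p1, p2` are regular then so is `q1 p1`. -/
lemma Sys.qp_reg (S : Sys τ T a0 a1 a3 q1 p1 q2 p2 w f) {ε : ℂ} (hD : DPres τ ε)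
    (hT : Ord 0 T) (hp1 : Ord 0 p1) (hp2 : Ord 0 p2) : Ord 0 (fun z => q1 z * p1 z) := by
  rcases cases_zero S.mq1 with h | ⟨n, hn, a, ha, h⟩
  · exact (h.mul hp1).mono (by omega)
  · have h1 : Ord n (fun z => q1 z * (w z - q1 z)) := by
      refine ((hD.ord h.ord).add ((hT.mul ((Ord.const 1).sub (hp2.smul 4))).mono
        (by omega))).congr ?_
      filter_upwards [S.e1] with z hz
      rw [hz]; ring
    have h2 : Ord 0 (fun z => w z - q1 z) := (h1.div h ha).mono (by omega)
    have h3 : Lead n (fun z => 2 * q1 z - w z) a := by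
      refine ((h.sub (h2.low hn)).to rfl (by ring)).congr ?_
      filter_upwards with z; ring
    have h4 : Ord 0 (fun z => (2 * q1 z - w z) * p1 z) := by
      refine ((hD.ord hp1).sub (Ord.const a0)).congr ?_
      filter_upwards [S.e2] with z hz
      rw [hz]; ring
    exact (h.ord.mul (h4.div h3 ha)).mono (by omega)

lemma Sys.w_reg0 (S : Sys τ T a0 a1 a3 q1 p1 q2 p2 w f) {ε : ℂ} (hD : DPres τ ε)
    (hT : Ord 0 T) : Ord 0 w := by
  rcases cases_zero S.mw with h | ⟨N, hN, ω, hω, h⟩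
  · exact h
  · have hp1 := S.p1_reg hD (hT.mono (by omega)) hN hω h
    have hp2 := S.swap.p1_reg hD (hT.mono (by omega)) hN hω h
    have h1 := S.qp_reg hD hT hp1 hp2
    have h2 := S.swap.qp_reg hD hT hp2 hp1
    refine (((Ord.const (a0+a1+a3)).add (h1.smul 2)).add (h2.smul 2)).congr ?_
    filter_upwards with z
    rw [S.hw]

/-- Regularity of `q1` at `t = 0`. -/
lemma Sys.place0 (S : Sys τ T a0 a1 a3 q1 p1 q2 p2 w f) {ε : ℂ} (hD : DPres τ ε)
    (hT : Lead 1 T 1) : Ord 0 q1 := by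
  have hT0 : Ord 0 T := hT.ord.mono (by omega)
  have hw := S.w_reg0 hD hT0
  have key : ∀ {q w : ℂ → ℂ}, Ord 0 w → Ord 0 (fun z => 2 * q z - w z) → Ord 0 q := by
    intro q w hw h
    refine ((h.add hw).smul (1/2)).congr ?_
    filter_upwards with z; ring
  rcases cases_zero S.mp1 with hp1 | ⟨k, hk, a, ha, h⟩
  swap
  · exact key hw (logder hD hk ha h S.e2)
  rcases cases_zero S.mp2 with hp2 | ⟨k, hk, κ, hκ, hp2⟩
  · exact S.q1_reg hD (hT0.mono (by omega)) hw hp2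
  have hq2 := key hw (logder hD hk hκ hp2 S.e4)
  rcases cases_zero S.mq1 with h | ⟨n, hn, a, ha, h⟩
  · exact h
  exfalso
  have h1 : Lead n (fun z => 2 * q1 z - w z) (2 * a) :=
    ((h.smul 2).sub (hw.low hn)).to rfl (by ring)
  have h2 : Ord 0 (fun z => (2 * q1 z - w z) * p1 z) := by
    refine ((hD.ord hp1).sub (Ord.const a0)).congr ?_
    filter_upwards [S.e2] with z hz
    rw [hz]; ring
  have h3 : Ord (-n) p1 := (h2.div h1 (by simpa using ha)).mono (by omega)
  have h4 : Lead (2 * n) (fun z => 4 * (T z * p2 z)) (a * a) := by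
    have l1 := (h.mul h).to (show n + n = 2 * n by ring) rfl
    refine ((l1.add (((((hD.ord h.ord).sub ((h.ord.mul hw).mono (by omega))).add
      (hT.ord.mono (by omega)))).low (by omega))).to rfl (by ring)).congr ?_
    filter_upwards [S.e1] with z hz
    rw [hz]; ring
  have h5 := h4.order_eq (by simpa using ha) ((hT.mul hp2).smul 4) (by simpa using hκ)
  have h6 : Ord 0 (fun z => p2 z * q2 z) := by
    refine (((hw.sub (Ord.const (a0+a1+a3))).sub (((h.ord.mul h3).mono (by omega)).smul 2)).smul
      (1/2)).congr ?_
    filter_upwards with z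
    rw [S.hw]; ring
  have h7 : Ord 3 q2 := (h6.div hp2 hκ).mono (by omega)
  have h8 : Ord 2 T := by
    refine (((((hT.ord.mul h3).smul 4).mono (by omega)).add
      ((h7.mul (hw.sub hq2)).mono (by omega))).sub ((hD.ord h7).mono (by omega))).congr ?_
    filter_upwards [S.e3] with z hz
    rw [hz]; ring
  exact one_ne_zero (hT.zero_of h8 (by omega))

/-- At infinity, `w` is regular. -/
lemma Sys.w_pole_inf (S : Sys τ T a0 a1 a3 q1 p1 q2 p2 w f) {ε : ℂ} (hD : DPres τ ε)
    (hT : Ord (-1) T) {N : ℤ} {ω : ℂ} (hN : N < 0) (hω : ω ≠ 0) (hw : Lead N w ω)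
    {b : ℂ} (hb : b ≠ 0) (hp : Lead 0 p1 b) (hp2 : Ord 0 p2) : False := by
  have h2 : Ord 0 (fun z => p1 z * (2 * q1 z - w z)) := by
    refine ((hD.ord hp.ord).sub (Ord.const a0)).congr ?_
    filter_upwards [S.e2] with z hz
    rw [hz]; ring
  have h3 : Ord 0 (fun z => 2 * q1 z - w z) := (h2.div hp hb).mono (by omega)
  have l1 : Lead N q1 (ω / 2) := by
    refine ((((h3.low hN).add hw).smul (1/2)).to rfl (by ring)).congr ?_
    filter_upwards with z; ring
  have h4 := l1.mul (hw.sub l1)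
  have h5 : Ord (2 * N + 1) (fun z => q1 z * (w z - q1 z)) := by
    refine (((hD.ord l1.ord).mono (by omega)).add
      ((hT.mul ((Ord.const 1).sub (hp2.smul 4))).mono (by omega))).congr ?_
    filter_upwards [S.e1] with z hz
    rw [hz]; ring
  have h6 := h4.zero_of h5 (by omega)
  apply hω
  have : ω ^ 2 = 0 := by linear_combination 4 * h6
  simpa using this

lemma Sys.w_reg_inf (S : Sys τ T a0 a1 a3 q1 p1 q2 p2 w f) {ε : ℂ} (hD : DPres τ ε)
    (hT : Ord (-1) T) : Ord 0 w := by
  rcases cases_zero S.mw with h | ⟨N, hN, ω, hω, h⟩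
  · exact h
  · exfalso
    obtain ⟨b1, hp1⟩ := S.p1_reg hD hT hN hω h
    obtain ⟨b2, hp2⟩ := S.swap.p1_reg hD hT hN hω h
    have hf := (S.f_ord hD hN hω h).low (m := 0) (by omega)
    have hs : b1 + b2 - 1 = 0 := by
      refine Lead.uniq ((hp1.add hp2).sub (Lead.const 1)) (hf.congr ?_)
      filter_upwards with z
      rw [S.hf]
    by_cases hb : b1 = 0
    · have hb2 : b2 ≠ 0 := by rintro rfl; simp [hb] at hs
      exact S.swap.w_pole_inf hD hT hN hω h hb2 hp2 hp1.ord
    · exact S.w_pole_inf hD hT hN hω h hb hp1 hp2.ord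

lemma Sys.quarter (S : Sys τ T a0 a1 a3 q1 p1 q2 p2 w f) {ε : ℂ} (hD : DPres τ ε)
    (hT : Lead (-1) T 1) (hw : Ord 0 w) (hq1 : Ord 0 q1) : Lead 0 p2 (1/4) := by
  have h1 : Ord 0 (fun z => T z * (1 - 4 * p2 z)) := by
    refine (((hq1.mul (hw.sub hq1)).mono (by omega)).sub (hD.ord hq1)).congr ?_
    filter_upwards [S.e1] with z hz
    rw [hz]; ring
  have h2 : Lead 0 (fun z => 1 - 4 * p2 z) 0 := (h1.div hT one_ne_zero).low (by omega)
  refine ((((Lead.const 1).sub h2).smul (1/4)).to rfl (by ring)).congr ?_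
  filter_upwards with z; ring

lemma Sys.p1_reg_inf (S : Sys τ T a0 a1 a3 q1 p1 q2 p2 w f) {ε : ℂ} (hD : DPres τ ε)
    (hT : Lead (-1) T 1) (hw : Ord 0 w) : Ord 0 p1 := by
  rcases cases_zero S.mp1 with hp1 | ⟨k, hk, a, ha, h⟩
  · exact hp1
  · exfalso
    have hq1 : Ord 0 q1 := by
      refine (((logder hD hk ha h S.e2).add hw).smul (1/2)).congr ?_
      filter_upwards with z; ring
    have hp2 := S.quarter hD hT hw hq1
    rcases cases_zero S.mq2 with hq2 | ⟨n, hn, b, hb, hq2⟩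
    · have h1 : Ord (-1) (fun z => 4 * (T z * p1 z)) := by
        refine ((((hD.ord hq2).sub ((hq2.mul (hw.sub hq2)).mono (by omega))).mono
          (by omega)).add hT.ord).congr ?_
        filter_upwards [S.e3] with z hz
        rw [hz]; ring
      have := ((hT.mul h).smul 4).zero_of h1 (by omega)
      simp_all
    · have h1 : Ord 0 (fun z => p2 z * (2 * q2 z - w z)) := by
        refine ((hD.ord hp2.ord).sub (Ord.const a1)).congr ?_
        filter_upwards [S.e4] with z hz
        rw [hz]; ring
      have := (hp2.mul ((hq2.smul 2).sub (hw.low hn))).zero_of h1 (by omega)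
      simp_all

/-- The value of `q1` at infinity. -/
lemma Sys.place_inf (S : Sys τ T a0 a1 a3 q1 p1 q2 p2 w f) {ε : ℂ} (hD : DPres τ ε)
    (hT : Lead (-1) T 1) : Lead 0 q1 (-2 * a0 + a3) := by
  have hw := S.w_reg_inf hD hT.ord
  have hp1 := S.p1_reg_inf hD hT hw
  have hp2 := S.swap.p1_reg_inf hD hT hw
  obtain ⟨r1, hq1⟩ := S.q1_reg hD hT.ord hw hp2
  obtain ⟨r2, hq2⟩ := S.swap.q1_reg hD hT.ord hw hp1
  replace hp2 := S.quarter hD hT hw hq1.ord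
  replace hp1 := S.swap.quarter hD hT hw hq2.ord
  obtain ⟨ω, hw⟩ := hw
  have h0 : ω = (a0 + a1 + a3) + 2 * (r1 * (1/4)) + 2 * (r2 * (1/4)) := by
    refine hw.uniq ((((Lead.const (a0+a1+a3)).add ((hq1.mul hp1).smul 2)).add
      ((hq2.mul hp2).smul 2)).congr ?_)
    filter_upwards with z
    rw [S.hw]
  have h1 : ε * (0:ℤ) * (1/4) = 1/4 * (2 * r1 - ω) + a0 :=
    (hD _ _ _ hp1).uniq (((hp1.mul ((hq1.smul 2).sub hw)).add (Lead.const a0)).congr S.e2)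
  have h2 : ε * (0:ℤ) * (1/4) = 1/4 * (2 * r2 - ω) + a1 :=
    (hD _ _ _ hp2).uniq (((hp2.mul ((hq2.smul 2).sub hw)).add (Lead.const a1)).congr S.e4)
  simp only [Int.cast_zero, mul_zero, zero_mul] at h1 h2
  refine hq1.to rfl ?_
  linear_combination h0 - 3 * h1 - h2


/-- Derivations behaving like `d/dz`. -/
structure DReg (τ : ℂ → ℂ) : Prop where
  lead : ∀ {n : ℤ} {f : ℂ → ℂ} {a : ℂ}, Lead n f a →
    Lead (n - 1) (fun z => τ z * deriv f z) (n * a)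
  reg : ∀ {f : ℂ → ℂ}, Ord 0 f → Ord 0 (fun z => τ z * deriv f z)

lemma DReg.ord (hD : DReg τ) {n f} (h : Ord n f) :
    Ord (n - 1) (fun z => τ z * deriv f z) := by
  obtain ⟨a, h⟩ := h
  exact ⟨_, hD.lead h⟩

/-- Pole of order at most one with integral residue. -/
def IR (f : ℂ → ℂ) : Prop := ∃ m : ℤ, Lead (-1) f m

lemma Lead.ir {f : ℂ → ℂ} {r : ℂ} (m : ℤ) (h : Lead (-1) f r) (hr : r = m) : IR f :=
  ⟨m, h.to rfl hr⟩

lemma Ord.ir {f : ℂ → ℂ} (h : Ord 0 f) : IR f :=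
  ⟨0, (h.low (by omega)).to rfl (by simp)⟩

lemma logderc (hD : DReg τ) {n : ℤ} {p g : ℂ → ℂ} {a b : ℂ} (hn : n < 0) (ha : a ≠ 0)
    (hp : Lead n p a) (h : ∀ᶠ z in 𝓝[≠] (0:ℂ), τ z * deriv p z = p z * g z + b) :
    Lead (-1) g n := by
  have h1 : Lead (n - 1) (fun z => p z * g z) (n * a) := by
    refine (((hD.lead hp).sub ((Ord.const b).low (show n - 1 < 0 by omega))).to rfl
      (by ring)).congr ?_
    filter_upwards [h] with z hz
    rw [hz]; ring
  exact (h1.div hp ha).to (by omega) (by field_simp)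

lemma half_res {q w : ℂ → ℂ} {n : ℤ} {r ω : ℂ} (h : Lead n (fun z => 2 * q z - w z) r)
    (hw : Lead n w ω) : Lead n q ((r + ω) / 2) := by
  refine (((h.add hw).smul (1/2)).to rfl (by ring)).congr ?_
  filter_upwards with z; ring

/-- Comparison of the coefficients of `z^(-2)` in the first equation. -/
lemma Sys.Tp2 (S : Sys τ T a0 a1 a3 q1 p1 q2 p2 w f) (hD : DReg τ) (hT : Ord 0 T)
    {r ω : ℂ} (hq : Lead (-1) q1 r) (hw : Lead (-1) w ω) :
    Lead (-2) (fun z => T z * p2 z) ((r * r - r * ω - r) / 4) := by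
  refine (((((hD.lead hq).sub (hq.mul (hw.sub hq))).add (hT.low (by omega))).smul (1/4)).to
    (by norm_num) (by push_cast; ring)).congr ?_
  filter_upwards [S.e1] with z hz
  rw [hz]; ring

/-- `q1` has at most a simple pole when `w` has and `p2` does not have a pole of order `≥ 3`
with possible exception. -/
lemma Sys.q1_pole (S : Sys τ T a0 a1 a3 q1 p1 q2 p2 w f) (hD : DReg τ) (hT : Ord 0 T)
    (hw : Ord (-1) w) (hp2 : Ord (-1) p2) : Ord (-1) q1 := by
  rcases cases_zero S.mq1 with h | ⟨n, hn, a, ha, h⟩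
  · exact h.mono (by omega)
  by_cases hn1 : n = -1
  · exact hn1 ▸ h.ord
  exfalso
  have h1 : Ord (n - 1) (fun z => q1 z * q1 z) := by
    refine ((((h.ord.mul hw).mono (by omega)).sub (hD.ord h.ord)).sub
      ((hT.mul (((Ord.const 1).mono (by omega)).sub (hp2.smul 4))).mono (by omega))).congr ?_
    filter_upwards [S.e1] with z hz
    rw [hz]; ring
  have := (h.mul h).zero_of h1 (by omega)
  simp_all

lemma Sys.p2_of_p1 (S : Sys τ T a0 a1 a3 q1 p1 q2 p2 w f) (hf : Ord 0 f) {k : ℤ} {κ : ℂ}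
    (hk : k < 0) (h : Lead k p1 κ) : Lead k p2 (-κ) := by
  refine ((((hf.add (Ord.const 1)).low hk).sub h).to rfl (by ring)).congr ?_
  filter_upwards with z
  rw [S.hf]; ring

lemma Sys.p2_reg (S : Sys τ T a0 a1 a3 q1 p1 q2 p2 w f) (hf : Ord 0 f)
    (h : Ord 0 p1) : Ord 0 p2 := by
  refine ((hf.add (Ord.const 1)).sub h).congr ?_
  filter_upwards with z
  rw [S.hf]; ring

/-- Case: `w` regular. -/
lemma Sys.caseA (S : Sys τ T a0 a1 a3 q1 p1 q2 p2 w f) (hD : DReg τ) {c : ℂ} (hc : c ≠ 0)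
    (hT : Lead 0 T c) (hw : Ord 0 w) : IR q1 := by
  have hw1 := hw.low (m := -1) (by omega)
  have hf : Ord 0 f := by
    rcases cases_zero S.mf with h | ⟨n, hn, a, ha, h⟩
    · exact h
    · exfalso
      have h1 := (logderc hD hn ha h S.e5).uniq (hw1.smul (-1))
      have : n = 0 := by
        have : (n:ℂ) = 0 := by simpa using h1
        exact_mod_cast this
      omega
  rcases cases_zero S.mp1 with hp1 | ⟨k, hk, κ, hκ, hp1⟩
  · have hp2 := S.p2_reg hf hp1
    obtain ⟨r, hr⟩ := S.q1_pole hD hT.ord (hw.mono (by omega)) (hp2.mono (by omega))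
    have h1 := (S.Tp2 hD hT.ord hr hw1).zero_of (hT.ord.mul hp2) (by omega)
    have h2 : r * (r - 1) = 0 := by linear_combination 4 * h1
    rcases mul_eq_zero.1 h2 with h | h
    · exact hr.ir 0 (by simpa using h)
    · exact hr.ir 1 (by simpa using sub_eq_zero.1 h)
  · exfalso
    have hp2 := S.p2_of_p1 hf hk hp1
    have hk0 : (k:ℂ) ≠ 0 := by exact_mod_cast hk.ne
    have hk2 : (k:ℂ) - 2 ≠ 0 := by
      have : k - 2 ≠ 0 := by omega
      exact_mod_cast this
    have g1 := half_res (logderc hD hk hκ hp1 S.e2) hw1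
    have g2 := half_res (logderc hD hk (neg_ne_zero.2 hκ) hp2 S.e4) hw1
    have t1 := S.Tp2 hD hT.ord g1 hw1
    have t2 := S.swap.Tp2 hD hT.ord g2 hw1
    have e0 : ((k:ℂ) + 0) / 2 * ((k + 0) / 2) - (k + 0) / 2 * 0 - (k + 0) / 2
        = k * (k - 2) / 4 := by ring
    rw [e0] at t1 t2
    have hk' := t1.order_eq (by simp [hk0, hk2]) (hT.mul hp2) (by simp [hc, hκ])
    have hk'' : k = -2 := by omega
    subst hk''
    have u1 := t1.uniq (hT.mul hp2)
    have u2 := t2.uniq (hT.mul hp1)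
    push_cast at u1 u2
    have : (1:ℂ) = 0 := by linear_combination u1 + u2
    norm_num at this

/-- Case: `w` has a pole, `p1`, `p2` regular: simple poles. -/
lemma Sys.caseB_simple (S : Sys τ T a0 a1 a3 q1 p1 q2 p2 w f) (hD : DReg τ)
    (hT : Ord 0 T)
    {b1 b2 : ℂ} (hp1 : Lead 0 p1 b1) (hp2 : Lead 0 p2 b2) (hs : b1 + b2 = 1) :
    Ord (-1) q1 := by
  have aux : ∀ {a0 a1 a3 : ℂ} {q1 p1 q2 p2 w f : ℂ → ℂ}, Sys τ T a0 a1 a3 q1 p1 q2 p2 w f →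
      Ord 0 p2 → ∀ {n : ℤ} {a : ℂ}, n < 0 → a ≠ 0 → Lead n q1 a →
      Ord (-1) (fun z => w z - q1 z) := by
    intro a0 a1 a3 q1 p1 q2 p2 w f S hp2 n a hn ha h
    have h1 : Ord (n - 1) (fun z => q1 z * (w z - q1 z)) := by
      refine ((hD.ord h.ord).add ((hT.mul ((Ord.const 1).sub (hp2.smul 4))).mono
        (by omega))).congr ?_
      filter_upwards [S.e1] with z hz
      rw [hz]; ring
    exact (h1.div h ha).mono (by omega)
  rcases cases_zero S.mq1 with h | ⟨n, hn, a, ha, h⟩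
  · exact h.mono (by omega)
  by_cases hn1 : n = -1
  · exact hn1 ▸ h.ord
  exfalso
  have h2 := aux S hp2.ord hn ha h
  have h3 : Lead n (fun z => 2 * q1 z - w z) a := by
    refine ((h.sub (h2.low (by omega))).to rfl (by ring)).congr ?_
    filter_upwards with z; ring
  have h4 : Ord 0 (fun z => (2 * q1 z - w z) * p1 z) := by
    refine ((hD.reg hp1.ord).sub (Ord.const a0)).congr ?_
    filter_upwards [S.e2] with z hz
    rw [hz]; ring
  have h5 := h4.div h3 ha
  have hb1 : b1 = 0 := hp1.zero_of h5 (by omega)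
  have hb2 : b2 = 1 := by simpa [hb1] using hs
  subst hb2
  have h6 : Ord 0 (fun z => q1 z * p1 z) := (h.ord.mul h5).mono (by omega)
  have h7 : Lead n w a := by
    refine (((h2.low (m := n) (by omega)).add h).to rfl (by ring)).congr ?_
    filter_upwards with z; ring
  have h8 : Lead n (fun z => p2 z * q2 z) (a / 2) := by
    refine ((((h7.sub ((Ord.const (a0+a1+a3)).low hn)).sub ((h6.smul 2).low hn)).smul (1/2)).to rfl
      (by ring)).congr ?_
    filter_upwards with z
    rw [S.hw]; ring
  have h9 : Lead n q2 (a / 2) := (h8.div hp2 one_ne_zero).to (by omega) (by ring)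
  have h10 := aux S.swap hp1.ord hn (by simpa using ha) h9
  have := (h7.sub h9).zero_of h10 (by omega)
  apply ha
  linear_combination 2 * this

/-- Case: `w` has a pole, `p1`, `p2` regular. -/
lemma Sys.caseB (S : Sys τ T a0 a1 a3 q1 p1 q2 p2 w f) (hD : DReg τ)
    (hT : Ord 0 T) {N : ℤ} {ω : ℂ} (hN : N < 0) (hω : ω ≠ 0) (hw : Lead N w ω)
    {b1 b2 : ℂ} (hp1 : Lead 0 p1 b1) (hp2 : Lead 0 p2 b2) (hs : b1 + b2 = 1) :
    IR q1 := by
  obtain ⟨r1, hq1⟩ := S.caseB_simple hD hT hp1 hp2 hs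
  obtain ⟨r2, hq2⟩ := S.swap.caseB_simple hD hT hp2 hp1 (by rw [← hs]; ring)
  obtain ⟨ν, hw1⟩ : Ord (-1) w := by
    refine ((((Ord.const (a0+a1+a3)).mono (by omega)).add
      ((hq1.ord.mul hp1.ord).smul 2)).add ((hq2.ord.mul hp2.ord).smul 2)).congr ?_
    filter_upwards with z
    rw [S.hw]
  have hN1 : N = -1 := by
    by_contra hne
    exact hω (hw.zero_of hw1.ord (by omega))
  subst hN1
  have e1 := (S.Tp2 hD hT hq1 hw).zero_of (hT.mul hp2.ord) (by omega)
  have e3 := (S.swap.Tp2 hD hT hq2 hw).zero_of (hT.mul hp1.ord) (by omega)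
  have e2 : b1 * (2 * r1 - ω) = 0 := by
    refine (hp1.mul ((hq1.smul 2).sub hw)).zero_of (m := 0) ?_ (by omega)
    refine ((hD.reg hp1.ord).sub (Ord.const a0)).congr ?_
    filter_upwards [S.e2] with z hz
    rw [hz]; ring
  have e4 : b2 * (2 * r2 - ω) = 0 := by
    refine (hp2.mul ((hq2.smul 2).sub hw)).zero_of (m := 0) ?_ (by omega)
    refine ((hD.reg hp2.ord).sub (Ord.const a1)).congr ?_
    filter_upwards [S.e4] with z hz
    rw [hz]; ring
  have f1 : r1 * (r1 - ω - 1) = 0 := by linear_combination 4 * e1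
  have f3 : r2 * (r2 - ω - 1) = 0 := by linear_combination 4 * e3
  have fin : ω = -2 → IR q1 := by
    rintro rfl
    rcases mul_eq_zero.1 f1 with h | h
    · exact hq1.ir 0 (by simpa using h)
    · exact hq1.ir (-1) (by push_cast; linear_combination h)
  have gen : ∀ r : ℂ, 2 * r - ω = 0 → r * (r - ω - 1) = 0 → ω = -2 := by
    intro r h1 h2
    rcases mul_eq_zero.1 h2 with h | h
    · exact absurd (by linear_combination 2 * h - h1) hω
    · linear_combination -2 * h + h1
  rcases mul_eq_zero.1 e2 with h | h
  · rcases mul_eq_zero.1 e4 with h' | h'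
    · simp [h, h'] at hs
    · exact fin (gen _ h' f3)
  · exact fin (gen _ h f1)

/-- Case: `w` has a pole, `f` regular, `p1` has a pole. -/
lemma Sys.caseC (S : Sys τ T a0 a1 a3 q1 p1 q2 p2 w f) (hD : DReg τ) {c : ℂ} (hc : c ≠ 0)
    (hT : Lead 0 T c) {N : ℤ} {ω : ℂ} (hN : N < 0) (hω : ω ≠ 0) (hw : Lead N w ω)
    (hf : Ord 0 f) {k : ℤ} {κ : ℂ} (hk : k < 0) (hκ : κ ≠ 0) (hp1 : Lead k p1 κ) : IR q1 := by
  have hp2 := S.p2_of_p1 hf hk hp1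
  have g1 := logderc hD hk hκ hp1 S.e2
  have g2 := logderc hD hk (neg_ne_zero.2 hκ) hp2 S.e4
  have d0 : Ord 0 (fun z => q1 z - q2 z) := by
    refine Ord.congr (Lead.raise (n := -1) (((g1.sub g2).smul (1/2)).to rfl (by ring))) ?_
    filter_upwards with z; ring
  have d1 : Ord (-1) (fun z => T z * (p1 z - p2 z)) := by
    have := (((d0.mul (((g1.add g2).smul (-1/2)).ord)).mono (m := -1) (by omega)).sub
      ((hD.reg d0).mono (by omega))).smul (1/4)
    refine this.congr ?_
    filter_upwards [S.e1, S.e3, deriv_sub_ev S.mq1 S.mq2] with z h1 h2 h3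
    rw [h3]
    linear_combination (1/4) * (h1 - h2)
  have hk1 : k = -1 := by
    by_contra hne
    have h1 := (hT.mul (hp1.sub hp2)).zero_of d1 (by omega)
    have : c * κ = 0 := by linear_combination h1 / 2
    simp_all
  subst hk1
  have key : Ord (N - 1) (fun z => q1 z * (w z - q1 z) + q2 z * (w z - q2 z)) → 
      N = -1 := by
    intro h
    by_contra hne
    have l1 := half_res (g1.low (show N < -1 by omega)) hw
    have l2 := half_res (g2.low (show N < -1 by omega)) hw
    have h5 := ((l1.mul (hw.sub l1)).add (l2.mul (hw.sub l2))).zero_of h (by omega)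
    apply hω
    have : ω ^ 2 = 0 := by linear_combination 2 * h5
    simpa using this
  have qord : ∀ {q : ℂ → ℂ} {r : ℂ}, Lead (-1) (fun z => 2 * q z - w z) r → Ord N q := by
    intro q r h
    obtain ⟨r', h'⟩ := h.ord.mono (show N ≤ -1 by omega)
    exact (half_res h' hw).ord
  have sumeq : ∀ᶠ z in 𝓝[≠] (0:ℂ), q1 z * (w z - q1 z) + q2 z * (w z - q2 z) =
      (τ z * deriv q1 z + τ z * deriv q2 z) - T z * (4 * f z + 2) := by
    filter_upwards [S.e1, S.e3] with z h1 h2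
    rw [h1, h2, S.hf]; ring
  have hTf : Ord 0 (fun z => T z * (4 * f z + 2)) := 
    (hT.ord.mul ((hf.smul 4).add (Ord.const 2))).mono (by omega)
  have hN1 : N = -1 := by
    apply key
    exact (((hD.ord (qord g1)).add (hD.ord (qord g2))).sub (hTf.mono (by omega))).congr sumeq
  subst hN1
  have l1 := half_res g1 hw
  have l2 := half_res g2 hw
  have h5 := ((l1.mul (hw.sub l1)).add (l2.mul (hw.sub l2))).uniq
    (((((hD.lead l1).add (hD.lead l2)).sub (hTf.low (by omega))).congr sumeq).to (by norm_num) rfl)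
  push_cast at h5 l1
  have h6 : (ω - 1) * (ω + 3) = 0 := by linear_combination 2 * h5
  rcases mul_eq_zero.1 h6 with h | h
  · exact l1.ir 0 (by push_cast; linear_combination h / 2)
  · exact l1.ir (-2) (by push_cast; linear_combination h / 2)

/-- Case: `f` has a pole, `p1` has a simple pole, `p2` a double pole: impossible. -/
lemma Sys.caseD12 (S : Sys τ T a0 a1 a3 q1 p1 q2 p2 w f) (hD : DReg τ) {c : ℂ}
    (hT : Lead 0 T c) {n : ℤ} {φ : ℂ} (hφ : φ ≠ 0) (hf : Lead n f φ)
    (hw : Lead (-1) w (-n)) {κ1 κ2 : ℂ} (hκ1 : κ1 ≠ 0) (hκ2 : κ2 ≠ 0) (hp1 : Lead (-1) p1 κ1)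
    (hp2 : Lead (-2) p2 κ2) : False := by
  have hf2 : Lead (-2) f κ2 := by
    refine ((((hp1.low (by omega)).add hp2).sub ((Ord.const 1).low (by omega))).to rfl
      (by ring)).congr ?_
    filter_upwards with z
    rw [S.hf]
  have hn := hf.order_eq hφ hf2 hκ2
  subst hn
  have hq1 := half_res (logderc hD (by omega) hκ1 hp1 S.e2) hw
  have hq2 := half_res (logderc hD (by omega) hκ2 hp2 S.e4) hw
  push_cast at hq1 hq2 hw
  have u1 := (S.Tp2 hD hT.ord hq1 hw).uniq ((hT.mul hp2).to (by omega) rfl)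
  obtain ⟨β, hq2⟩ : Ord 0 q2 := Lead.raise (n := -1) (hq2.to rfl (by norm_num))
  have u2 : β * (2 - 0) + 4 * (c * κ1) = 0 := by
    have l := (hq2.mul (hw.sub (hq2.low (by omega)))).add
      ((((hT.mul hp1).smul 4)))
    have := l.zero_of (m := 0) (((hD.reg hq2.ord).add hT.ord).congr (by
      filter_upwards [S.e3] with z hz
      rw [hz]; ring)) (by omega)
    linear_combination this
  have u3 : 2 * (1 / 2 * κ1) + 2 * (β * κ2) = 0 := by
    have l := (((hq1.mul hp1).smul 2)).add (((hq2.mul hp2).smul 2).to (by norm_num) rfl)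
    have := l.zero_of (m := -1) ((hw.ord.sub ((Ord.const (a0+a1+a3)).mono (by omega))).congr (by
      filter_upwards with z
      rw [S.hw]; ring)) (by omega)
    linear_combination this
  apply hκ1
  linear_combination (4/9) * u3 - (4/9) * κ2 * u2 - (16/9) * κ1 * u1

/-- Case: `f` has a pole, `p1` and `p2` have poles. -/
lemma Sys.caseD (S : Sys τ T a0 a1 a3 q1 p1 q2 p2 w f) (hD : DReg τ) {c : ℂ} (hc : c ≠ 0)
    (hT : Lead 0 T c) {n : ℤ} {φ : ℂ} (hn : n < 0) (hφ : φ ≠ 0) (hf : Lead n f φ)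
    (hw : Lead (-1) w (-n)) {k1 k2 : ℤ} {κ1 κ2 : ℂ} (hk1 : k1 < 0) (hk2 : k2 < 0)
    (hκ1 : κ1 ≠ 0) (hκ2 : κ2 ≠ 0) (hp1 : Lead k1 p1 κ1)
    (hp2 : Lead k2 p2 κ2) : IR q1 := by
  have hq1 := half_res (logderc hD hk1 hκ1 hp1 S.e2) hw
  have hq2 := half_res (logderc hD hk2 hκ2 hp2 S.e4) hw
  have t1 := S.Tp2 hD hT.ord hq1 hw
  have t2 := S.swap.Tp2 hD hT.ord hq2 hw
  have hk2' : -2 ≤ k2 := by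
    by_contra hne
    have := (hT.mul hp2).zero_of t1.ord (by omega)
    simp_all
  have hk1' : -2 ≤ k1 := by
    by_contra hne
    have := (hT.mul hp1).zero_of t2.ord (by omega)
    simp_all
  have c1 : k1 = -1 ∨ k1 = -2 := by omega
  have c2 : k2 = -1 ∨ k2 = -2 := by omega
  have hford : ∀ m : ℤ, m < 0 → ∀ b1 b2, Lead m p1 b1 → Lead m p2 b2 → Lead m f (b1 + b2) := by
    intro m hm b1 b2 h1 h2
    refine (((h1.add h2).sub ((Ord.const 1).low hm)).to rfl
      (by ring)).congr ?_
    filter_upwards with z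
    rw [S.hf]
  have hnm : ∀ m : ℤ, m < 0 → ∀ b1 b2, Lead m p1 b1 → Lead m p2 b2 → m ≤ n := by
    intro m hm b1 b2 h1 h2
    by_contra hne
    exact hφ (hf.zero_of (hford m hm b1 b2 h1 h2).ord (by omega))
  rcases c1 with rfl | rfl <;> rcases c2 with rfl | rfl
  · have hn' := hnm _ (by omega) _ _ hp1 hp2
    have : n = -1 := by omega
    subst this
    exact hq1.ir 0 (by push_cast; ring)
  · exact (S.caseD12 hD hT hφ hf hw hκ1 hκ2 hp1 hp2).elim
  · exact (S.swap.caseD12 hD hT hφ hf hw hκ2 hκ1 hp2 hp1).elim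
  · have hn' := hnm _ (by omega) _ _ hp1 hp2
    have : n = -2 ∨ n = -1 := by omega
    rcases this with rfl | rfl
    · exact hq1.ir 0 (by push_cast; ring)
    · exfalso
      have u1 := t1.uniq ((hT.mul hp2).to (by omega) rfl)
      have u2 := t2.uniq ((hT.mul hp1).to (by omega) rfl)
      have u3 := (hford _ (by omega) _ _ hp1 hp2).zero_of hf.ord (by omega)
      push_cast at u1 u2
      have : (1:ℂ) = 0 := by linear_combination (8/5) * (u1 + u2 + c * u3)
      norm_num at this

/-- Case: `f` has a pole, `p1` regular and `p2` has a pole. -/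
lemma Sys.caseE (S : Sys τ T a0 a1 a3 q1 p1 q2 p2 w f) (hD : DReg τ) {c : ℂ} (hc : c ≠ 0)
    (hT : Lead 0 T c) {n : ℤ} {φ : ℂ} (hn : n < 0) (hφ : φ ≠ 0) (hf : Lead n f φ)
    (hw : Lead (-1) w (-n)) {k : ℤ} {κ : ℂ} (hk : k < 0)
    (hκ : κ ≠ 0) (hp1 : Ord 0 p1)
    (hp2 : Lead k p2 κ) : IR q1 ∧ IR q2 := by
  have hfk : Lead k f κ := by
    refine ((((hp1.low hk).add hp2).sub ((Ord.const 1).low hk)).to rfl (by ring)).congr ?_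
    filter_upwards with z
    rw [S.hf]
  have hkn := hf.order_eq hφ hfk hκ
  subst hkn
  have hn0 : (-(n:ℂ)) ≠ 0 := by simpa using hn.ne
  have hq2 : Ord 0 q2 := 
    Lead.raise (n := -1) ((half_res (logderc hD hk hκ hp2 S.e4) hw).to rfl (by ring))
  refine ⟨?_, hq2.ir⟩
  obtain ⟨β, hq2'⟩ : Ord 1 q2 := by
    have h1 : Ord 0 (fun z => w z * q2 z) := by
      refine (((hD.reg hq2).add ((hq2.mul hq2).mono (by omega))).add
        ((hT.ord.mul ((Ord.const 1).sub (hp1.smul 4))).mono (by omega))).congr ?_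
      filter_upwards [S.e3] with z hz
      rw [hz]; ring
    exact (h1.div hw hn0).mono (by omega)
  have e2 : Ord 0 (fun z => (2 * q1 z - w z) * p1 z) := by
    refine ((hD.reg hp1).sub (Ord.const a0)).congr ?_
    filter_upwards [S.e2] with z hz
    rw [hz]; ring
  by_cases hn1 : n = -1
  · subst hn1
    obtain ⟨r, hr⟩ := S.q1_pole hD hT.ord hw.ord hp2.ord
    have h1 := (S.Tp2 hD hT.ord hr hw).zero_of (hT.mul hp2).ord (by omega)
    push_cast at h1
    have h2 : r * (r - 2) = 0 := by linear_combination 4 * h1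
    rcases mul_eq_zero.1 h2 with h | h
    · exact hr.ir 0 (by simpa using h)
    · exact hr.ir 2 (by push_cast; linear_combination h)
  have hcases : Ord (-1) q1 ∨ ∃ m : ℤ, m < -1 ∧ ∃ a, a ≠ 0 ∧ Lead m q1 a := by
    rcases cases_zero S.mq1 with h | ⟨m, hm, a, ha, h⟩
    · exact Or.inl (h.mono (by omega))
    by_cases hm1 : m = -1
    · exact Or.inl (hm1 ▸ h.ord)
    · exact Or.inr ⟨m, by omega, a, ha, h⟩
  rcases hcases with ⟨r, hr⟩ | ⟨m, hm, a, ha, h⟩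
  · have t1 := S.Tp2 hD hT.ord hr hw
    have hn2 : n = -2 := by
      by_contra hne
      have := (hT.mul hp2).zero_of t1.ord (by omega)
      simp_all
    subst hn2
    have u1 := t1.uniq ((hT.mul hp2).to (by omega) rfl)
    push_cast at u1 hw
    obtain ⟨b, hp1⟩ := hp1
    have u2 := (((hr.smul 2).sub hw).mul hp1).zero_of e2 (by omega)
    by_cases hr1 : r = 1
    · exact hr.ir 1 (by simpa using hr1)
    have hb : b = 0 := by
      rcases mul_eq_zero.1 u2 with h | h
      · exact absurd (by linear_combination h / 2) hr1
      · exact h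
    subst hb
    have hp1' : Ord 1 p1 := hp1.raise
    have u3 : - -2 = 0 + 2 * 0 + 2 * (β * κ) := by
      refine hw.uniq (Lead.congr (((Lead.low (Lead.const (a0+a1+a3)) (by omega)).add
        (((hr.ord.mul hp1').low (by omega)).smul 2)).add
        (((hq2'.mul hp2).to (by norm_num) rfl).smul 2)) ?_)
      filter_upwards with z
      rw [S.hw]
    have u4 : β = c := by
      have l := (((hq2'.mul (hw.sub (hq2.low (by omega)))).sub
        ((hT.mul ((Lead.const 1).sub (hp1.smul 4))).to (by norm_num) rfl)).congr S.e3)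
      have := ((hD.lead hq2').to (m := 1 + -1) (by norm_num) rfl).uniq l
      push_cast at this
      linear_combination -this
    subst u4
    have h2 : (r - 4) * (r + 1) = 0 := by linear_combination 4 * u1 - 2 * u3
    rcases mul_eq_zero.1 h2 with h | h
    · exact hr.ir 4 (by push_cast; linear_combination h)
    · exact hr.ir (-1) (by push_cast; linear_combination h)
  · exfalso
    have h1 : Lead m (fun z => 2 * q1 z - w z) (2 * a) :=
      ((h.smul 2).sub (hw.low hm)).to rfl (by ring)
    have h3 : Ord (-m) p1 := (e2.div h1 (by simpa using ha)).mono (by omega)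
    have h4 : Lead (2 * m) (fun z => 4 * (T z * p2 z)) (a * a) := by
      have l1 := (h.mul h).to (show m + m = 2 * m by ring) rfl
      refine ((l1.add (((((hD.ord h.ord).sub ((h.ord.mul hw.ord).mono (by omega))).add
        (hT.ord.mono (by omega)))).low (by omega))).to rfl (by ring)).congr ?_
      filter_upwards [S.e1] with z hz
      rw [hz]; ring
    have h5 := h4.order_eq (by simpa using ha) ((hT.mul hp2).smul 4) (by simp [hc, hκ])
    have h6 : Ord (-1) (fun z => p2 z * q2 z) := by
      refine (((hw.ord.sub ((Ord.const (a0+a1+a3)).mono (by omega))).sub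
        (((h.ord.mul h3).mono (by omega)).smul 2)).smul (1/2)).congr ?_
      filter_upwards with z
      rw [S.hw]; ring
    have h7 : Ord 3 q2 := (h6.div hp2 hκ).mono (by omega)
    have h8 : Ord 1 T := by
      refine (((((hT.ord.mul h3).smul 4).mono (by omega)).add
        ((h7.mul (hw.ord.sub (hq2.mono (by omega)))).mono (by omega))).sub
        ((hD.ord h7).mono (by omega))).congr ?_
      filter_upwards [S.e3] with z hz
      rw [hz]; ring
    exact hc (hT.zero_of h8 (by omega))

/-- At `t = c ≠ 0` the function `q1` has an integral residue. -/
lemma Sys.place_c (S : Sys τ T a0 a1 a3 q1 p1 q2 p2 w f) (hD : DReg τ) {c : ℂ} (hc : c ≠ 0)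
    (hT : Lead 0 T c) : IR q1 := by
  rcases cases_zero S.mw with hw | ⟨N, hN, ω, hω, hw⟩
  · exact S.caseA hD hc hT hw
  rcases cases_zero S.mf with hf | ⟨n, hn, φ, hφ, hf⟩
  · rcases cases_zero S.mp1 with hp1 | ⟨k, hk, κ, hκ, hp1⟩
    · have hp2 := S.p2_reg hf hp1
      have hf1 : Lead 0 f 0 := by
        have h1 : Ord 0 (fun z => w z * f z) := by
          refine ((Ord.const (-a3)).sub (hD.reg hf)).congr ?_
          filter_upwards [S.e5] with z hz
          rw [hz]; ring
        exact (h1.div hw hω).low (by omega)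
      obtain ⟨b1, hp1⟩ := hp1
      obtain ⟨b2, hp2⟩ := hp2
      have hs : b1 + b2 - 1 = 0 := by
        refine Lead.uniq ((hp1.add hp2).sub (Lead.const 1)) (hf1.congr ?_)
        filter_upwards with z
        rw [S.hf]
      exact S.caseB hD hT.ord hN hω hw hp1 hp2 (sub_eq_zero.1 hs)
    · exact S.caseC hD hc hT hN hω hw hf hk hκ hp1
  · have hw1 : Lead (-1) w (-n) := by
      refine (((logderc hD hn hφ hf S.e5).smul (-1)).to rfl (by ring)).congr ?_
      filter_upwards with z; ring
    rcases cases_zero S.mp1 with hp1 | ⟨k, hk, κ, hκ, hp1⟩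
    · rcases cases_zero S.mp2 with hp2 | ⟨k, hk, κ, hκ, hp2⟩
      · exfalso
        refine pole_reg hn hφ hf (((hp1.add hp2).sub (Ord.const 1)).congr ?_)
        filter_upwards with z
        rw [S.hf]
      · exact (S.caseE hD hc hT hn hφ hf hw1 hk hκ hp1 hp2).1
    · rcases cases_zero S.mp2 with hp2 | ⟨k2, hk2, κ2, hκ2, hp2⟩
      · exact (S.swap.caseE hD hc hT hn hφ hf hw1 hk hκ hp2 hp1).2
      · exact S.caseD hD hc hT hn hφ hf hw1 hk hk2 hκ hκ2 hp1 hp2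


lemma evR_eq (f : RatFunc ℂ) (t : ℂ) : evR f t = RatFunc.eval (RingHom.id ℂ) t f := rfl

lemma evR_add {f g : RatFunc ℂ} {t : ℂ} (hf : NoPoleAt f t) (hg : NoPoleAt g t) :
    evR (f + g) t = evR f t + evR g t := by
  simp only [evR_eq]
  exact RatFunc.eval_add (RingHom.id ℂ) t hf hg

lemma noPole_add {f g : RatFunc ℂ} {t : ℂ} (hf : NoPoleAt f t) (hg : NoPoleAt g t) :
    NoPoleAt (f + g) t := by
  intro h
  have h1 := Polynomial.eval_eq_zero_of_dvd_of_eval_eq_zero (RatFunc.denom_add_dvd f g) h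
  rw [Polynomial.eval_mul] at h1
  exact (mul_eq_zero.1 h1).elim hf hg

/-- The simple fraction `b / (X - c)`. -/
noncomputable def frac (b c : ℂ) : RatFunc ℂ :=
  algebraMap ℂ[X] (RatFunc ℂ) (C b) / algebraMap ℂ[X] (RatFunc ℂ) (X - C c)

lemma noPole_frac {b c t : ℂ} (h : t ≠ c) : NoPoleAt (frac b c) t := by
  intro h0
  have h1 := Polynomial.eval_eq_zero_of_dvd_of_eval_eq_zero
    (RatFunc.denom_div_dvd (C b) (X - C c)) h0
  simp [sub_eq_zero] at h1
  exact h h1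

lemma evR_frac {b c t : ℂ} (h : t ≠ c) : evR (frac b c) t = b / (t - c) := by
  have hne : (X - C c : ℂ[X]) ≠ 0 := X_sub_C_ne_zero c
  have h1 := RatFunc.num_div_denom (frac b c)
  have h2 : (frac b c).num * (X - C c) = C b * (frac b c).denom := by
    rw [RatFunc.num_mul_eq_mul_denom_iff hne]
    rfl
  have h3 := congrArg (Polynomial.eval t) h2
  simp only [eval_mul, eval_sub, eval_X, eval_C] at h3
  have h4 : (frac b c).denom.eval t ≠ 0 := noPole_frac h
  have h5 : t - c ≠ 0 := sub_ne_zero.2 h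
  rw [evR, div_eq_div_iff h4 h5, h3]

lemma frac_zero (c : ℂ) : frac 0 c = 0 := by simp [frac]

lemma evR_diff {f : RatFunc ℂ} {t : ℂ} (h : NoPoleAt f t) : DifferentiableAt ℂ (evR f) t := by
  have : evR f = fun t => f.num.eval t / f.denom.eval t := rfl
  rw [this]
  exact f.num.differentiableAt.fun_div f.denom.differentiableAt h

lemma int_diff (L : ℂ) (k : ℕ) : ∀ f : RatFunc ℂ, f.denom.roots.toFinset.card = k →
    NoPoleAt f 0 → Tendsto (evR f) (Bornology.cobounded ℂ) (𝓝 L) →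
    (∀ c : ℂ, c ≠ 0 → ∃ n : ℤ, NoPoleAt (f + frac (-(n * c)) c) c) →
    ∃ m : ℤ, L - evR f 0 = m := by
  induction k using Nat.strong_induction_on with
  | _ k ih =>
  intro f hk h0 hL hc
  by_cases hroot : ∃ c, f.denom.eval c = 0
  · obtain ⟨c, hcr⟩ := hroot
    have hc0 : c ≠ 0 := by
      rintro rfl
      exact h0 hcr
    obtain ⟨n, hn⟩ := hc c hc0
    set g := f + frac (-(n * c)) c with hg
    have hgn : ∀ t, NoPoleAt f t → NoPoleAt g t := by
      intro t ht
      have : t ≠ c := by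
        rintro rfl
        exact ht hcr
      exact noPole_add ht (noPole_frac this)
    have hlt : g.denom.roots.toFinset.card < k := by
      rw [← hk]
      apply Finset.card_lt_card
      rw [Finset.ssubset_iff_of_subset]
      · refine ⟨c, ?_, ?_⟩
        · simp [f.denom_ne_zero, hcr]
        · simp only [Multiset.mem_toFinset, mem_roots', not_and]
          intro _ h
          exact hn h
      · intro t
        simp only [Multiset.mem_toFinset, mem_roots', IsRoot.def]
        rintro ⟨_, h⟩
        refine ⟨f.denom_ne_zero, ?_⟩
        by_contra h'
        exact hgn t h' h
    have hev : ∀ᶠ t in Bornology.cobounded ℂ, NoPoleAt f t ∧ t ≠ c := by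
      have h1 : ∀ᶠ t in Bornology.cobounded ℂ, t ∉ (f.denom.roots.toFinset : Set ℂ) :=
        (Finset.finite_toSet f.denom.roots.toFinset).isBounded
      filter_upwards [h1] with t ht
      have h2 : NoPoleAt f t := by
        intro h
        apply ht
        simp [f.denom_ne_zero, h]
      refine ⟨h2, ?_⟩
      rintro rfl
      exact h2 hcr
    have hgL : Tendsto (evR g) (Bornology.cobounded ℂ) (𝓝 L) := by
      have h1 : Tendsto (fun t : ℂ => -(n * c) / (t - c)) (Bornology.cobounded ℂ) (𝓝 0) := by
        have h2 : Tendsto (fun t : ℂ => t - c) (Bornology.cobounded ℂ) (Bornology.cobounded ℂ) := by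
          simp
        have h3 := (tendsto_inv₀_cobounded (α := ℂ)).comp h2
        have h4 := h3.const_mul (-(n * c))
        simpa [div_eq_mul_inv] using h4
      have h5 := hL.add h1
      rw [add_zero] at h5
      refine h5.congr' ?_
      filter_upwards [hev] with t ht
      rw [hg, evR_add ht.1 (noPole_frac ht.2), evR_frac ht.2]
    obtain ⟨m, hm⟩ := ih _ hlt g rfl (hgn 0 h0) hgL (by
      intro d hd
      by_cases hdc : d = c
      · subst hdc
        refine ⟨0, ?_⟩
        simpa [frac_zero] using hn
      · obtain ⟨n', hn'⟩ := hc d hd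
        refine ⟨n', ?_⟩
        have := noPole_add hn' (noPole_frac (b := -(n * c)) hdc)
        rwa [add_right_comm] at this)
    refine ⟨m + n, ?_⟩
    rw [hg, evR_add h0 (noPole_frac hc0.symm), evR_frac hc0.symm] at hm
    have : -(n * c) / (0 - c) = n := by field_simp; ring
    rw [this] at hm
    push_cast
    linear_combination hm
  · push Not at hroot
    have hdeg : f.denom.degree = 0 := by
      by_contra hne
      obtain ⟨c, hcr⟩ := Complex.exists_root (f := f.denom)
        (lt_of_le_of_ne (zero_le_degree_iff.2 f.denom_ne_zero) (Ne.symm hne))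
      exact hroot c hcr
    have hd1 : f.denom = 1 := (Polynomial.Monic.degree_le_zero_iff_eq_one f.monic_denom).1 hdeg.le
    have hev : evR f = fun t => f.num.eval t := by
      funext t
      simp [evR, hd1]
    rw [hev] at hL ⊢
    have hdeg0 : f.num.degree ≤ 0 := by
      by_contra hne
      have h1 := f.num.tendsto_norm_atTop (not_le.1 hne)
        (l := Bornology.cobounded ℂ) (z := id) tendsto_norm_cobounded_atTop
      exact not_tendsto_atTop_of_tendsto_nhds hL.norm h1
    rw [eq_C_of_degree_le_zero hdeg0] at hL ⊢
    simp only [eval_C] at hL ⊢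
    refine ⟨0, ?_⟩
    rw [tendsto_nhds_unique hL tendsto_const_nhds]
    simp

lemma merom_poly {φ : ℂ → ℂ} (h : MeromorphicAt φ 0) (P : ℂ[X]) :
    MeromorphicAt (fun z => P.eval (φ z)) 0 := by
  induction P using Polynomial.induction_on' with
  | add p q hp hq =>
    simp only [eval_add]
    exact hp.add hq
  | monomial n a =>
    simp only [eval_monomial]
    exact (MeromorphicAt.const _ _).mul (h.pow n)

lemma merom_evR {φ : ℂ → ℂ} (h : MeromorphicAt φ 0) (f : RatFunc ℂ) :
    MeromorphicAt (fun z => evR f (φ z)) 0 :=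
  (merom_poly h f.num).div (merom_poly h f.denom)

lemma ev_noPole {φ : ℂ → ℂ} (h : ∀ a, ∀ᶠ z in 𝓝[≠] (0:ℂ), φ z ≠ a) (f : RatFunc ℂ) :
    ∀ᶠ z in 𝓝[≠] (0:ℂ), NoPoleAt f (φ z) := by
  have h1 : ∀ᶠ z in 𝓝[≠] (0:ℂ), ∀ a ∈ f.denom.roots.toFinset, φ z ≠ a :=
    (Finset.eventually_all _).2 fun a _ => h a
  filter_upwards [h1] with z hz h0
  exact hz (φ z) (by simp [f.denom_ne_zero, h0]) rfl

lemma noPole_of_ord {φ : ℂ → ℂ} (h : ∀ a, ∀ᶠ z in 𝓝[≠] (0:ℂ), φ z ≠ a)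
    (hφ : ContinuousAt φ 0) {f : RatFunc ℂ} (hf : Ord 0 (fun z => evR f (φ z))) :
    NoPoleAt f (φ 0) := by
  intro h0
  obtain ⟨a, g, hg, -, hfg⟩ := hf
  have h1 : Tendsto (fun z => f.num.eval (φ z)) (𝓝[≠] 0) (𝓝 (f.num.eval (φ 0))) :=
    ((f.num.continuous.continuousAt.comp hφ).tendsto).mono_left nhdsWithin_le_nhds
  have h2 : Tendsto (fun z => g z * f.denom.eval (φ z)) (𝓝[≠] 0)
      (𝓝 (g 0 * f.denom.eval (φ 0))) :=
    ((hg.continuousAt.mul (f.denom.continuous.continuousAt.comp hφ)).tendsto).mono_left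
      nhdsWithin_le_nhds
  have h3 : f.num.eval (φ 0) = g 0 * f.denom.eval (φ 0) := by
    refine tendsto_nhds_unique h1 (h2.congr' ?_)
    filter_upwards [hfg, ev_noPole h f] with z hz hz'
    rw [zpow_zero, one_mul] at hz
    rw [← hz, evR, div_mul_cancel₀ _ hz']
  rw [h0, mul_zero] at h3
  obtain ⟨u, v, huv⟩ := f.isCoprime_num_denom
  have := congrArg (Polynomial.eval (φ 0)) huv
  simp [h0, h3] at this

lemma mkSys {a0 a1 a3 : ℂ} {q1 p1 q2 p2 : RatFunc ℂ} (hsol : IsSasanoSol a0 a1 a3 q1 p1 q2 p2)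
    {φ : ℂ → ℂ} (h1 : MeromorphicAt φ 0) (h2 : ∀ a, ∀ᶠ z in 𝓝[≠] (0:ℂ), φ z ≠ a)
    (h3 : ∀ᶠ z in 𝓝[≠] (0:ℂ), ∃ d, HasDerivAt φ d z ∧ τ z * d = φ z) :
    Sys τ φ a0 a1 a3 (fun z => evR q1 (φ z)) (fun z => evR p1 (φ z))
      (fun z => evR q2 (φ z)) (fun z => evR p2 (φ z))
      (fun z => (a0 + a1 + a3) + 2 * (evR q1 (φ z) * evR p1 (φ z)) +
        2 * (evR q2 (φ z) * evR p2 (φ z)))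
      (fun z => evR p1 (φ z) + evR p2 (φ z) - 1) := by
  have key : ∀ f : RatFunc ℂ, ∀ᶠ z in 𝓝[≠] (0:ℂ),
      τ z * deriv (fun z => evR f (φ z)) z = φ z * deriv (evR f) (φ z) := by
    intro f
    filter_upwards [h3, ev_noPole h2 f] with z hz hz'
    obtain ⟨d, hd, hd'⟩ := hz
    have := (evR_diff hz').hasDerivAt.comp z hd
    have h4 : deriv (fun z => evR f (φ z)) z = deriv (evR f) (φ z) * d := this.deriv
    rw [h4]
    linear_combination deriv (evR f) (φ z) * hd'
  have sol : ∀ᶠ z in 𝓝[≠] (0:ℂ), NoPoleAt q1 (φ z) ∧ NoPoleAt p1 (φ z) ∧ NoPoleAt q2 (φ z) ∧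
      NoPoleAt p2 (φ z) := by
    filter_upwards [ev_noPole h2 q1, ev_noPole h2 p1, ev_noPole h2 q2, ev_noPole h2 p2] with z
      h4 h5 h6 h7
    exact ⟨h4, h5, h6, h7⟩
  refine ⟨merom_evR h1 _, merom_evR h1 _, merom_evR h1 _, merom_evR h1 _, fun _ => rfl,
    fun _ => rfl, ?_, ?_, ?_, ?_⟩
  · filter_upwards [key q1, sol] with z hz ⟨s1, s2, s3, s4⟩
    rw [hz, (hsol _ s1 s2 s3 s4).1]; ring
  · filter_upwards [key p1, sol] with z hz ⟨s1, s2, s3, s4⟩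
    rw [hz, (hsol _ s1 s2 s3 s4).2.1]; ring
  · filter_upwards [key q2, sol] with z hz ⟨s1, s2, s3, s4⟩
    rw [hz, (hsol _ s1 s2 s3 s4).2.2.1]; ring
  · filter_upwards [key p2, sol] with z hz ⟨s1, s2, s3, s4⟩
    rw [hz, (hsol _ s1 s2 s3 s4).2.2.2]; ring

lemma dpres (ε : ℂ) : DPres (fun z => ε * z) ε := by
  intro n f a h
  have h1 := ((Lead.zpow 1).mul h.deriv).smul ε
  refine (h1.to (by omega) (by ring)).congr ?_
  filter_upwards with z
  rw [zpow_one]; ring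

lemma lead_one_add : Lead 0 (fun z : ℂ => 1 + z) 1 :=
  ⟨fun z => 1 + z, analyticAt_const.add analyticAt_id, by simp, by simp⟩

lemma dreg : DReg (fun z => 1 + z) where
  lead h := (lead_one_add.mul h.deriv).to (by omega) (by ring)
  reg h := (lead_one_add.ord.mul h.deriv0).mono (by omega)

lemma ne_of_inj {φ : ℂ → ℂ} (h : Function.Injective φ) (a : ℂ) :
    ∀ᶠ z in 𝓝[≠] (0:ℂ), φ z ≠ a := by
  by_cases ha : ∃ z0, φ z0 = a
  · obtain ⟨z0, rfl⟩ := ha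
    by_cases hz : z0 = 0
    · subst hz
      filter_upwards [ne_ev] with z hz
      exact fun h' => hz (h h')
    · have : ∀ᶠ z in 𝓝[≠] (0:ℂ), z ≠ z0 :=
        (show ∀ᶠ z in 𝓝 (0:ℂ), z ≠ z0 from isOpen_ne.mem_nhds (Ne.symm hz)).filter_mono nhdsWithin_le_nhds
      filter_upwards [this] with z hz
      exact fun h' => hz (h h')
  · push Not at ha
    exact Eventually.of_forall ha

/-- Everything about `q1`. -/
lemma main_q1 {a0 a1 a3 : ℂ} {q1 p1 q2 p2 : RatFunc ℂ}
    (hsol : IsSasanoSol a0 a1 a3 q1 p1 q2 p2) :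
    NoPoleAt q1 0 ∧ ∃ m : ℤ, (-2 * a0 + a3) - evR q1 0 = m := by
  have h0 : NoPoleAt q1 0 := by
    have S := mkSys (τ := fun z => 1 * z) (φ := fun z => z) hsol (MeromorphicAt.id 0)
      (ne_of_inj Function.injective_id)
      (Eventually.of_forall fun z => ⟨1, hasDerivAt_id z, by ring⟩)
    have hT : Lead 1 (fun z : ℂ => z) 1 :=
      (Lead.zpow 1).congr (by filter_upwards with z; simp)
    exact noPole_of_ord (φ := fun z => z) (ne_of_inj Function.injective_id) continuousAt_id
      (S.place0 (dpres 1) hT)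
  refine ⟨h0, int_diff _ _ q1 rfl h0 ?_ ?_⟩
  · have S := mkSys (τ := fun z => (-1) * z) (φ := fun z => z⁻¹) hsol
      (MeromorphicAt.id 0).inv (ne_of_inj inv_injective) (by
        filter_upwards [ne_ev] with z hz
        exact ⟨_, hasDerivAt_inv hz, by field_simp⟩)
    have hT : Lead (-1) (fun z : ℂ => z⁻¹) 1 :=
      (Lead.zpow (-1)).congr (by filter_upwards with z; simp)
    obtain ⟨g, hg, hg0, hfg⟩ := S.place_inf (dpres (-1)) hT
    have h1 : Tendsto (fun z => evR q1 z⁻¹) (𝓝[≠] 0) (𝓝 (-2 * a0 + a3)) := by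
      rw [← hg0]
      refine (hg.continuousAt.tendsto.mono_left nhdsWithin_le_nhds).congr' ?_
      filter_upwards [hfg] with z hz
      simp [hz]
    have h2 := h1.comp (tendsto_inv₀_cobounded' (α := ℂ))
    refine h2.congr ?_
    intro t
    simp
  · intro c hc
    have hinj : Function.Injective (fun z : ℂ => c * (1 + z)) := by
      intro x y h
      have := mul_left_cancel₀ hc h
      exact add_left_cancel this
    have S := mkSys (τ := fun z => 1 + z) (φ := fun z => c * (1 + z)) hsol
      (by fun_prop) (ne_of_inj hinj) (by
        refine Eventually.of_forall fun z => ⟨c * 1, ?_, by ring⟩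
        exact ((hasDerivAt_id z).const_add 1).const_mul c)
    obtain ⟨n, hn⟩ := S.place_c dreg hc ((lead_one_add.smul c).to rfl (by ring))
    refine ⟨n, ?_⟩
    have h1 : Lead (-1) (fun z => evR (q1 + frac (-(n * c)) c) (c * (1 + z))) 0 := by
      refine ((hn.sub ((Lead.zpow (-1)).smul n)).to rfl (by ring)).congr ?_
      filter_upwards [ne_ev, ev_noPole (ne_of_inj hinj) q1] with z hz hz'
      have hzc : c * (1 + z) ≠ c := by
        intro h
        apply hz
        have : c * z = 0 := by linear_combination h
        simpa [hc] using this
      have hzc' : c * (1 + z) - c = c * z := by ring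
      rw [evR_add hz' (noPole_frac hzc), evR_frac hzc, hzc', zpow_neg_one]
      field_simp
      ring
    have := noPole_of_ord (φ := fun z => c * (1 + z)) (ne_of_inj hinj) (by fun_prop) h1.raise
    simpa using this

lemma swap_sol {a0 a1 a3 : ℂ} {q1 p1 q2 p2 : RatFunc ℂ}
    (hsol : IsSasanoSol a0 a1 a3 q1 p1 q2 p2) : IsSasanoSol a1 a0 a3 q2 p2 q1 p1 := by
  intro t h1 h2 h3 h4
  obtain ⟨e1, e2, e3, e4⟩ := hsol t h3 h4 h1 h2
  refine ⟨?_, ?_, ?_, ?_⟩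
  · rw [e3]; ring
  · rw [e4]; ring
  · rw [e1]; ring
  · rw [e2]; ring

end Sasano

theorem sasano_value_difference_integer (a0 a1 a2 a3 : ℂ)
    (hpar : a0 + a1 + 2 * a2 + a3 = 1 / 2)
    (q1 p1 q2 p2 : RatFunc ℂ)
    (hsol : IsSasanoSol a0 a1 a3 q1 p1 q2 p2) :
    NoPoleAt q1 0 ∧ NoPoleAt q2 0 ∧
    (∃ m : ℤ, (-2 * a0 + a3) - evR q1 0 = m) ∧
    (∃ n : ℤ, (-2 * a1 + a3) - evR q2 0 = n) := by
  obtain ⟨h1, h2⟩ := Sasano.main_q1 hsol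
  obtain ⟨h3, h4⟩ := Sasano.main_q1 (Sasano.swap_sol hsol)
  exact ⟨h1, h3, h2, h4⟩
end
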